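/- arXiv:1910.11225 — 2 statements merged into one kernel-verified Lean document; each statement's English description precedes it below -/
import Mathlib

section
/- Suppose d = d(n) := p(n)·n satisfies log n ≪ d ≪ n and additionally d ≥ (log n)^{ω} for some function ω = ω(n) → ∞, and i = i(n) ∈ ℕ is such that d^i ≪ n and d^{i+1}/n − 2·log n → ∞. Then asymptotically almost surely, for G ∈ G(n,p): ζ(G) ∼ (n·log d)/d^i, i.e., ζ(G)·d^i/(n·log d) → 1 as n → ∞. -/
open Filter SimpleGraph Set
open scoped Topology

noncomputable section

/-- The probability, under the Erdős–Rényi binomial random graph `G(n,p)`, of a set `A`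
of graphs on vertex set `Fin n`: each pair of distinct vertices is an edge
independently with probability `p`. -/
noncomputable def gnpProb (n : ℕ) (p : ℝ) (A : Set (SimpleGraph (Fin n))) : ℝ := by
  classical
  exact ∑ G ∈ Finset.univ.filter (fun G : SimpleGraph (Fin n) => G ∈ A),
      p ^ (Nat.card G.edgeSet) * (1 - p) ^ (n.choose 2 - Nat.card G.edgeSet)

/-- A sequence of graph events `A n ⊆ G(n, p n)` holds asymptotically almost surely. -/
def AAS (p : ℕ → ℝ) (A : (n : ℕ) → Set (SimpleGraph (Fin n))) : Prop :=
  Tendsto (fun n : ℕ => gnpProb n (p n) (A n)) atTop (nhds 1)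

/-- The set of vertices at graph distance exactly `j` from `v`. -/
def gSphere {V : Type*} (G : SimpleGraph V) (v : V) (j : ℕ) : Set V :=
  {u | G.edist v u = j}

/-- The set of vertices at graph distance at most `j` from some vertex of `A`. -/
def gBall {V : Type*} (G : SimpleGraph V) (A : Set V) (j : ℕ) : Set V :=
  {u | ∃ v ∈ A, G.edist v u ≤ j}

/-- The result of probing with sensor set `S` while the robber is at `v`: the cops
learn the sensor set together with the distance from each sensor to the robber. -/
noncomputable def probe {V : Type*} (G : SimpleGraph V) (S : Finset V) (v : V) :
    Finset V × (V → ℕ) := by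
  classical
  exact (S, fun s => if s ∈ S then G.dist s v else 0)

/-- A cop strategy: given the list of past probe results, choose the next sensor set. -/
def CopStrategy (V : Type*) : Type _ := List (Finset V × (V → ℕ)) → Finset V

/-- A robber trajectory: at each step the robber either stays or moves along an edge. -/
def IsRobberWalk {V : Type*} (G : SimpleGraph V) (w : ℕ → V) : Prop :=
  ∀ t, w (t + 1) = w t ∨ G.Adj (w t) (w (t + 1))

/-- The history of probe results produced in the first `t` rounds when the cops play
strategy `σ` against the robber walk `w` (round `t+1` probes position `w t`). -/
noncomputable def gameHistory {V : Type*} (G : SimpleGraph V) (σ : CopStrategy V)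
    (w : ℕ → V) : ℕ → List (Finset V × (V → ℕ))
  | 0 => []
  | t + 1 => gameHistory G σ w t ++ [probe G (σ (gameHistory G σ w t)) (w t)]

/-- The cops win the localization game on `G` with `k` sensors: there is a strategy,
probing exactly `k` vertices each round, such that for every robber walk there is a
round in which every robber walk producing the same probe results is at the same
vertex, i.e. the cops can locate the robber. -/
def CopsWin {V : Type*} (G : SimpleGraph V) (k : ℕ) : Prop :=
  ∃ σ : CopStrategy V, (∀ h, (σ h).card = k) ∧
    ∀ w : ℕ → V, IsRobberWalk G w → ∃ t : ℕ,
      ∀ w' : ℕ → V, IsRobberWalk G w' →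
        gameHistory G σ w' (t + 1) = gameHistory G σ w (t + 1) → w' t = w t

/-- The localization number `ζ(G)`: the least number of sensors with which the cops
can win the localization game on `G`. -/
noncomputable def localizationNumber {V : Type*} (G : SimpleGraph V) : ℕ :=
  sInf {k | CopsWin G k}

end

/-!
In a typical `G ∈ G(n,p)` small sets expand by a factor close to `d`, so a ball of radius `j ≤ i`
has about `d ^ j` vertices. A vertex outside a ball of radius `i` misses all of its vertices with
probability about `exp (-d ^ (i + 1) / n) = o(n⁻²)`, so the diameter is at most `i + 1`.

Two vertices `u ≠ v` are separated by every sensor in the symmetric difference of their balls of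
radius `i`, which consists of about `2 d ^ i` of the `n` vertices. If the robber is known
to be in `X`, he moves to one of at most about `d |X|` vertices, and `k = (1 + ε) n log d / d ^ i`
random sensors separate a fraction `1 - o(d⁻²)` of the pairs among them. Hence some choice of `k`
sensors leaves only classes of indistinguishable vertices that have one element or are smaller than
`X`, and the robber is eventually located.

Conversely, the balls of radius `i - 1` around `k = (1 - ε) n log d / d ^ i` sensors cover at most
`(1 - ε / 2) n log d / d` vertices, so at least about `d ^ (ε / 4) n / d` vertices have no neighbour
in them and are at the maximal distance `i + 1` from every sensor. Almost all of these have a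
neighbour in any given set of `n log d / d` robber positions. So the sensors may report `i + 1` in
every round while the number of possible positions never drops.
-/

namespace LocalizationGame

/-! ### Independence of edges -/

section Independence

open MeasureTheory ProbabilityTheory unitInterval

lemma iIndepFun_curry {Ω ι κ α : Type*} [MeasurableSpace Ω] [MeasurableSpace α] {P : Measure Ω}
    {X : ι → κ → Ω → α} (hX : ∀ i j, Measurable (X i j))
    (h : iIndepFun (fun x : ι × κ ↦ X x.1 x.2) P) : iIndepFun (fun i ω j ↦ X i j ω) P := by
  have := h.isProbabilityMeasure
  have (i : ι) (j : κ) : IsProbabilityMeasure (P.map (X i j)) :=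
    Measure.isProbabilityMeasure_map (hX i j).aemeasurable
  have hrow (i : ι) :
      P.map (fun ω j ↦ X i j ω) = Measure.infinitePi fun j ↦ P.map (X i j) :=
    (iIndepFun_iff_map_fun_eq_infinitePi_map (hX i)).1
      (h.precomp (g := Prod.mk i) (Prod.mk_right_injective i))
  have hjoint := (iIndepFun_iff_map_fun_eq_infinitePi_map fun x : ι × κ ↦ hX x.1 x.2).1 h
  rw [iIndepFun_iff_map_fun_eq_infinitePi_map (by fun_prop)]
  simp_rw [hrow]
  rw [← Measure.infinitePi_map_curry fun i j ↦ P.map (X i j), ← hjoint,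
    Measure.map_map (by fun_prop) (by fun_prop)]
  rfl

variable {V : Type*} {p : I}

instance [Finite V] : DiscreteMeasurableSpace (SimpleGraph V) :=
  have : MeasurableSingletonClass (SimpleGraph V) := ⟨fun G ↦ by
    have h : (edgeSet : SimpleGraph V → _) ⁻¹' {G.edgeSet} = {G} := by ext; simp
    exact h ▸ measurable_edgeSet (measurableSet_singleton _)⟩
  inferInstance

lemma gnpProb_eq_binomialRandom_real {n : ℕ} (A : Set (SimpleGraph (Fin n))) :
    gnpProb n p A = G(Fin n, p).real A := by
  classical
  have hA : A = (Finset.univ.filter (· ∈ A) : Finset (SimpleGraph (Fin n))) := by simp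
  rw [hA, ← sum_measureReal_singleton, gnpProb]
  simp [Measure.real, binomialRandom_singleton, Nat.card_coe_set_eq, Nat.card_fin,
    -Nat.card_eq_fintype_card]

variable [Countable V]

lemma map_mem_edgeSet_binomialRandom :
    G(V, p).map (fun G e ↦ e ∈ G.edgeSet) = Measure.infinitePi fun e : Sym2 V ↦
      toNNReal p • Measure.dirac (¬ e.IsDiag) + toNNReal (σ p) • Measure.dirac False := by
  have h : ((fun (G : SimpleGraph V) e ↦ e ∈ G.edgeSet) ∘ fromEdgeSet) ∘
      (fun P : Sym2 V → Prop ↦ {e | P e}) = fun P e ↦ P e ∧ ¬ e.IsDiag := by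
    ext P e; simp
  rw [binomialRandom_eq_map, setBernoulli_eq_map, Measure.map_map (by fun_prop) (by fun_prop),
    Measure.map_map (by fun_prop) (by fun_prop), h, Measure.infinitePi_map_pi (X := fun _ ↦ Prop)
      _ (f := fun (e : Sym2 V) q ↦ q ∧ ¬ e.IsDiag) (by fun_prop)]
  congr! 2 with e
  rw [Measure.map_add _ _ (by fun_prop), Measure.map_smul, Measure.map_smul,
    Measure.map_dirac' (by fun_prop), Measure.map_dirac' (by fun_prop)]
  simp

lemma map_mem_edgeSet_apply_binomialRandom (e : Sym2 V) :
    G(V, p).map (fun G ↦ e ∈ G.edgeSet) =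
      toNNReal p • Measure.dirac (¬ e.IsDiag) + toNNReal (σ p) • Measure.dirac False := by
  rw [← Measure.infinitePi_map_eval (fun e : Sym2 V ↦
      toNNReal p • Measure.dirac (¬ e.IsDiag) + toNNReal (σ p) • Measure.dirac False) e,
    ← map_mem_edgeSet_binomialRandom, Measure.map_map (by fun_prop) (by fun_prop)]
  rfl

lemma iIndepFun_mem_edgeSet :
    iIndepFun (fun (e : Sym2 V) (G : SimpleGraph V) ↦ e ∈ G.edgeSet) G(V, p) := by
  rw [iIndepFun_iff_map_fun_eq_infinitePi_map (by fun_prop), map_mem_edgeSet_binomialRandom]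
  simp_rw [map_mem_edgeSet_apply_binomialRandom]

lemma binomialRandom_not_adj {u v : V} (h : u ≠ v) :
    G(V, p) {G | ¬ G.Adj u v} = toNNReal (σ p) := by
  have := DFunLike.congr_fun (map_mem_edgeSet_apply_binomialRandom (p := p) s(u, v)) {False}
  rw [Measure.map_apply (by fun_prop) (measurableSet_singleton _)] at this
  simpa [h, preimage] using this

lemma binomialRandom_real_forall_not_adj {v : V} {D : Finset V} (hv : v ∉ D) :
    G(V, p).real {G | ∀ u ∈ D, ¬ G.Adj v u} = (1 - p) ^ D.card := by
  have hind := (iIndepFun_mem_edgeSet (V := V) (p := p)).precomp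
    (g := fun u ↦ s(v, u)) (fun _ _ ↦ Sym2.congr_right.1)
  have h := hind.measure_inter_preimage_eq_mul D (sets := fun _ ↦ {False}) (by simp)
  have hset : {G : SimpleGraph V | ∀ u ∈ D, ¬ G.Adj v u} =
      ⋂ u ∈ D, (fun (e : Sym2 V) (G : SimpleGraph V) ↦ e ∈ G.edgeSet) s(v, u) ⁻¹' {False} := by
    ext; simp
  have hfac : ∀ u ∈ D, G(V, p) ((fun (e : Sym2 V) (G : SimpleGraph V) ↦ e ∈ G.edgeSet) s(v, u) ⁻¹'
      {False}) = toNNReal (σ p) := fun u hu ↦ by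
    simpa [preimage] using binomialRandom_not_adj (p := p) (ne_of_mem_of_not_mem hu hv).symm
  rw [hset, Measure.real, h, Finset.prod_congr rfl hfac]
  simp

end Independence

/-! ### Chernoff bounds -/

section Chernoff

open MeasureTheory ProbabilityTheory

lemma exp_neg_le_quadratic {x : ℝ} (hx : 0 ≤ x) : Real.exp (-x) ≤ 1 - x + x ^ 2 / 2 := by
  rw [Real.exp_neg, inv_le_comm₀ (Real.exp_pos x) (by nlinarith [sq_nonneg (x - 1)])]
  refine le_trans ?_ (Real.quadratic_le_exp_of_nonneg hx)
  rw [inv_le_iff_one_le_mul₀ (by nlinarith [sq_nonneg (x - 1)])]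
  nlinarith [sq_nonneg (x ^ 2)]

variable {Ω ι : Type*} {s : ι → Set Ω} {ε μ : ℝ}

lemma coe_ncard_eq_sum_indicator [Fintype ι] :
    (fun ω ↦ ({i | ω ∈ s i}.ncard : ℝ)) = ∑ i, (s i).indicator fun _ ↦ 1 := by
  classical
  ext ω
  simp [Set.indicator_apply, Finset.sum_apply, Set.ncard_eq_toFinset_card']

variable [MeasurableSpace Ω] {P : Measure Ω}

lemma mgf_indicator_le [IsProbabilityMeasure P] {A : Set Ω} (hA : MeasurableSet A) (t : ℝ) :
    mgf (A.indicator fun _ ↦ 1) P t ≤ Real.exp ((Real.exp t - 1) * P.real A) := by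
  have h : (fun ω ↦ Real.exp (t * A.indicator (fun _ ↦ 1) ω)) =
      fun ω ↦ 1 + A.indicator (fun _ ↦ Real.exp t - 1) ω := by
    ext ω; by_cases hω : ω ∈ A <;> simp [hω]
  rw [mgf, h, integral_add (integrable_const _) ((integrable_const _).indicator hA),
    integral_indicator_const _ hA]
  simpa [add_comm, mul_comm] using Real.add_one_le_exp ((Real.exp t - 1) * P.real A)

lemma mgf_ncard_le [Fintype ι] (hind : iIndepSet s P) (hs : ∀ i, MeasurableSet (s i)) (t : ℝ) :
    mgf (fun ω ↦ ({i | ω ∈ s i}.ncard : ℝ)) P t ≤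
      Real.exp ((Real.exp t - 1) * ∑ i, P.real (s i)) := by
  have := hind.isProbabilityMeasure
  rw [coe_ncard_eq_sum_indicator,
    hind.iIndepFun_indicator.mgf_sum fun i ↦ measurable_const.indicator (hs i),
    Finset.mul_sum, Real.exp_sum]
  exact Finset.prod_le_prod (fun _ _ ↦ mgf_nonneg) fun i _ ↦ mgf_indicator_le (hs i) t

lemma integrable_exp_mul_ncard [Finite ι] [IsFiniteMeasure P]
    (hs : ∀ i, MeasurableSet (s i)) (t : ℝ) :
    Integrable (fun ω ↦ Real.exp (t * ({i | ω ∈ s i}.ncard : ℝ))) P := by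
  have := Fintype.ofFinite ι
  refine integrable_exp_mul_of_mem_Icc (a := 0) (b := Fintype.card ι) ?_ (ae_of_all _ fun ω ↦
    ⟨by positivity, by exact_mod_cast Nat.card_eq_fintype_card (α := ι) ▸ Set.ncard_le_card _⟩)
  rw [coe_ncard_eq_sum_indicator, Finset.sum_fn]
  exact (Finset.measurable_sum _ fun i _ ↦
    (measurable_const (a := (1 : ℝ))).indicator (hs i)).aemeasurable

variable [Fintype ι]

lemma measureReal_ncard_le_of_le_sum (hind : iIndepSet s P) (hs : ∀ i, MeasurableSet (s i))
    (hε : 0 ≤ ε) (hμ0 : 0 ≤ μ) (hμ : μ ≤ ∑ i, P.real (s i)) :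
    P.real {ω | ({i | ω ∈ s i}.ncard : ℝ) ≤ (1 - ε) * μ} ≤ Real.exp (-(ε ^ 2 * μ / 2)) := by
  have := hind.isProbabilityMeasure
  refine (measure_le_le_exp_mul_mgf _ (neg_nonpos.2 hε)
    (integrable_exp_mul_ncard hs _)).trans ?_
  calc _ ≤ Real.exp (- -ε * ((1 - ε) * μ)) *
        Real.exp ((Real.exp (-ε) - 1) * ∑ i, P.real (s i)) := by
        gcongr; exact mgf_ncard_le hind hs _
    _ ≤ _ := by
      rw [← Real.exp_add, Real.exp_le_exp]
      have h1 : (Real.exp (-ε) - 1) * ∑ i, P.real (s i) ≤ (Real.exp (-ε) - 1) * μ :=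
        mul_le_mul_of_nonpos_left hμ (by simpa)
      nlinarith [exp_neg_le_quadratic hε]

lemma measureReal_le_ncard_of_sum_le (hind : iIndepSet s P) (hs : ∀ i, MeasurableSet (s i))
    (hε : 0 ≤ ε) (hε2 : ε ≤ 2) (hμ : ∑ i, P.real (s i) ≤ μ) :
    P.real {ω | (1 + ε) * μ ≤ ({i | ω ∈ s i}.ncard : ℝ)} ≤ Real.exp (-(ε ^ 2 * μ / 4)) := by
  have := hind.isProbabilityMeasure
  have hμ0 : 0 ≤ μ := (Finset.sum_nonneg fun _ _ ↦ measureReal_nonneg).trans hμ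
  refine (measure_ge_le_exp_mul_mgf _ (div_nonneg hε zero_le_two)
    (integrable_exp_mul_ncard hs _)).trans ?_
  calc _ ≤ Real.exp (-(ε / 2) * ((1 + ε) * μ)) *
        Real.exp ((Real.exp (ε / 2) - 1) * ∑ i, P.real (s i)) := by
        gcongr; exact mgf_ncard_le hind hs _
    _ ≤ _ := by
      rw [← Real.exp_add, Real.exp_le_exp]
      have h1 : (Real.exp (ε / 2) - 1) * ∑ i, P.real (s i) ≤ (Real.exp (ε / 2) - 1) * μ :=
        mul_le_mul_of_nonneg_left hμ (sub_nonneg.2 (Real.one_le_exp (by positivity)))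
      have h2 : Real.exp (ε / 2) - 1 - ε / 2 ≤ (ε / 2) ^ 2 :=
        (le_abs_self _).trans (Real.abs_exp_sub_one_sub_id_le
          (by rw [abs_of_nonneg (by positivity)]; linarith))
      nlinarith

end Chernoff

/-! ### Neighbourhoods in the random graph -/

section RandomGraph

open MeasureTheory ProbabilityTheory unitInterval

variable {V : Type*} {p : I}

lemma iIndepFun_adj [Countable V] (D : Finset V) :
    iIndepFun (fun (v : {v // v ∉ D}) (G : SimpleGraph V) (u : D) ↦ G.Adj v u) G(V, p) := by
  have hinj : Function.Injective fun x : {v // v ∉ D} × D ↦ s((x.1 : V), (x.2 : V)) := by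
    rintro ⟨⟨v, hv⟩, u, hu⟩ ⟨⟨v', hv'⟩, u', hu'⟩ h
    have : v = v' ∧ u = u' ∨ v = u' ∧ u = v' := by simpa using h
    grind
  exact iIndepFun_curry (fun v u ↦ by fun_prop) (iIndepFun_mem_edgeSet.precomp hinj)

/-- The vertices outside `D ∪ A` that have a neighbour in `A` but none in `D`: the part of the
boundary of `A` that is not covered by `D`. -/
noncomputable def newNeighbors [Fintype V] (G : SimpleGraph V) (D A : Finset V) : Finset V := by
  classical exact {v | v ∉ D ∪ A ∧ (∀ u ∈ D, ¬ G.Adj v u) ∧ ∃ u ∈ A, G.Adj v u}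

lemma mem_newNeighbors [Fintype V] {G : SimpleGraph V} {D A : Finset V} {v : V} :
    v ∈ newNeighbors G D A ↔
      v ∉ D ∧ v ∉ A ∧ (∀ u ∈ D, ¬ G.Adj v u) ∧ ∃ u ∈ A, G.Adj v u := by
  simp [newNeighbors, and_assoc]

variable [Fintype V] {D A : Finset V} {ε μ : ℝ}

lemma mem_newNeighbors_iff_of_notMem [DecidableEq V] {G : SimpleGraph V} {v : V}
    (hv : v ∉ D ∪ A) :
    v ∈ newNeighbors G D A ↔ (∀ u ∈ D, ¬ G.Adj v u) ∧ ¬ ∀ u ∈ D ∪ A, ¬ G.Adj v u := by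
  grind [mem_newNeighbors]

lemma binomialRandom_real_mem_newNeighbors (hDA : Disjoint D A) {v : V} (hvD : v ∉ D)
    (hvA : v ∉ A) :
    G(V, p).real {G | v ∈ newNeighbors G D A} =
      (1 - p) ^ D.card - (1 - p) ^ (D.card + A.card) := by
  classical
  have hv : v ∉ D ∪ A := by simp [hvD, hvA]
  have hset : {G : SimpleGraph V | v ∈ newNeighbors G D A} =
      {G | ∀ u ∈ D, ¬ G.Adj v u} \ {G | ∀ u ∈ D ∪ A, ¬ G.Adj v u} := by
    ext G; exact mem_newNeighbors_iff_of_notMem hv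
  rw [hset, measureReal_sdiff (by grind) .of_discrete,
    binomialRandom_real_forall_not_adj hvD, binomialRandom_real_forall_not_adj hv,
    Finset.card_union_of_disjoint hDA]

lemma iIndepSet_mem_newNeighbors [DecidableEq V] :
    iIndepSet (fun v : {v // v ∉ D ∪ A} ↦ {G | ↑v ∈ newNeighbors G D A}) G(V, p) := by
  rw [iIndepSet_iff_meas_biInter fun _ ↦ .of_discrete]
  intro T
  have h := (iIndepFun_adj (p := p) (D ∪ A)).measure_inter_preimage_eq_mul T
    (sets := fun _ ↦ {N | (∀ u : ↥(D ∪ A), ↑u ∈ D → ¬ N u) ∧ ¬ ∀ u, ¬ N u})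
    fun _ _ ↦ .of_discrete
  have hset (v : {v // v ∉ D ∪ A}) : {G | ↑v ∈ newNeighbors G D A} =
      (fun (G : SimpleGraph V) (u : ↥(D ∪ A)) ↦ G.Adj v u) ⁻¹'
        {N | (∀ u : ↥(D ∪ A), ↑u ∈ D → ¬ N u) ∧ ¬ ∀ u, ¬ N u} := by
    ext G
    refine (mem_newNeighbors_iff_of_notMem v.2).trans ?_
    simp only [mem_preimage, Subtype.forall]
    grind
  simpa only [hset] using h

lemma ncard_mem_newNeighbors [DecidableEq V] (G : SimpleGraph V) :
    {v : {v // v ∉ D ∪ A} | ↑v ∈ newNeighbors G D A}.ncard = (newNeighbors G D A).card := by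
  rw [← Set.ncard_image_of_injective _ Subtype.val_injective, ← Set.ncard_coe_finset]
  congr 1
  ext v
  simp only [mem_image, Subtype.exists]
  grind [mem_newNeighbors]

lemma sum_binomialRandom_real_mem_newNeighbors [DecidableEq V] (hDA : Disjoint D A) :
    ∑ v : {v // v ∉ D ∪ A}, G(V, p).real {G | ↑v ∈ newNeighbors G D A} =
      (Fintype.card V - (D.card + A.card)) *
        ((1 - (p : ℝ)) ^ D.card - (1 - p) ^ (D.card + A.card)) := by
  have h (v : {v // v ∉ D ∪ A}) := binomialRandom_real_mem_newNeighbors (p := p) hDA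
    (fun hv ↦ v.2 (Finset.mem_union_left _ hv)) (fun hv ↦ v.2 (Finset.mem_union_right _ hv))
  have hcard : ((Fintype.card {v // v ∉ D ∪ A} : ℕ) : ℝ) =
      Fintype.card V - (D.card + A.card) := by
    rw [Fintype.card_subtype_compl, Fintype.card_coe, Finset.card_union_of_disjoint hDA,
      Nat.cast_sub (Finset.card_union_of_disjoint hDA ▸ Finset.card_le_univ _), Nat.cast_add]
  simp only [h, Finset.sum_const, Finset.card_univ, nsmul_eq_mul, hcard]

lemma binomialRandom_real_card_newNeighbors_le (hDA : Disjoint D A) (hε : 0 ≤ ε) (hμ0 : 0 ≤ μ)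
    (hμ : μ ≤ (Fintype.card V - (D.card + A.card)) *
      ((1 - (p : ℝ)) ^ D.card - (1 - p) ^ (D.card + A.card))) :
    G(V, p).real {G | ((newNeighbors G D A).card : ℝ) ≤ (1 - ε) * μ} ≤
      Real.exp (-(ε ^ 2 * μ / 2)) := by
  classical
  simp_rw [← ncard_mem_newNeighbors]
  exact measureReal_ncard_le_of_le_sum iIndepSet_mem_newNeighbors (fun _ ↦ .of_discrete) hε hμ0
    (hμ.trans_eq (sum_binomialRandom_real_mem_newNeighbors hDA).symm)

lemma binomialRandom_real_le_card_newNeighbors (hDA : Disjoint D A) (hε : 0 ≤ ε) (hε2 : ε ≤ 2)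
    (hμ : (Fintype.card V - (D.card + A.card)) *
      ((1 - (p : ℝ)) ^ D.card - (1 - p) ^ (D.card + A.card)) ≤ μ) :
    G(V, p).real {G | (1 + ε) * μ ≤ (newNeighbors G D A).card} ≤
      Real.exp (-(ε ^ 2 * μ / 4)) := by
  classical
  simp_rw [← ncard_mem_newNeighbors]
  exact measureReal_le_ncard_of_sum_le iIndepSet_mem_newNeighbors (fun _ ↦ .of_discrete) hε hε2
    ((sum_binomialRandom_real_mem_newNeighbors hDA).trans_le hμ)

end RandomGraph

/-! ### Expansion of the random graph -/

section Expansion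

open MeasureTheory unitInterval

lemma measureReal_le_sum_of_subset_biUnion {Ω ι : Type*} [MeasurableSpace Ω] {P : Measure Ω}
    [IsFiniteMeasure P] {A : Set Ω} {T : Finset ι} {s : ι → Set Ω} {c : ι → ℝ}
    (hA : A ⊆ ⋃ i ∈ T, s i) (h : ∀ i ∈ T, P.real (s i) ≤ c i) : P.real A ≤ ∑ i ∈ T, c i :=
  (measureReal_mono hA (measure_ne_top P _)).trans <| (measureReal_biUnion_finset_le T s).trans
    (Finset.sum_le_sum h)

lemma one_sub_pow_le_exp_neg {x : ℝ} (hx : x ≤ 1) (k : ℕ) : (1 - x) ^ k ≤ Real.exp (-(k * x)) := by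
  rw [← mul_neg, Real.exp_nat_mul]
  exact pow_le_pow_left₀ (sub_nonneg.2 hx) (Real.one_sub_le_exp_neg x) k

lemma mul_one_sub_le_one_sub_pow {x : ℝ} (h0 : 0 ≤ x) (h1 : x ≤ 1) (k : ℕ) :
    k * x * (1 - k * x) ≤ 1 - (1 - x) ^ k := by
  have hk : 0 ≤ k * x := by positivity
  nlinarith [one_sub_pow_le_exp_neg h1 k, exp_neg_le_quadratic hk, sq_nonneg (k * x)]

variable {V : Type*} [Fintype V]

lemma sum_pow_card_le_exp {y : ℝ} (hy : 0 ≤ y) :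
    ∑ D : Finset V, y ^ D.card ≤ Real.exp (Fintype.card V * y) := by
  have h := Fintype.sum_pow_mul_eq_add_pow V y 1
  simp only [one_pow, mul_one] at h
  rw [h, Real.exp_nat_mul]
  exact pow_le_pow_left₀ (by positivity) (Real.add_one_le_exp y) _

lemma sum_pow_card_le_exp_sub_one {y : ℝ} (hy : 0 ≤ y) {T : Finset (Finset V)} (hT : ∅ ∉ T) :
    ∑ D ∈ T, y ^ D.card ≤ Real.exp (Fintype.card V * y) - 1 := by
  classical
  have h := (Finset.sum_le_univ_sum_of_nonneg (s := insert ∅ T) fun D ↦ pow_nonneg hy D.card).trans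
    (sum_pow_card_le_exp hy)
  rw [Finset.sum_insert hT, Finset.card_empty, pow_zero] at h
  linarith

lemma card_filter_card_le_le [Nonempty V] (m : ℕ) :
    (Finset.card {D : Finset V | D.card ≤ m} : ℝ) ≤ Real.exp 1 * (Fintype.card V : ℝ) ^ m := by
  have hV : (1 : ℝ) ≤ Fintype.card V := by exact_mod_cast Fintype.card_pos (α := V)
  rw [← mul_inv_cancel₀ (by positivity : (Fintype.card V : ℝ) ≠ 0), mul_comm,
    ← div_le_iff₀' (by positivity)]
  calc _ = ∑ D : Finset V with D.card ≤ m, ((Fintype.card V : ℝ) ^ m)⁻¹ := by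
        rw [Finset.sum_const, nsmul_eq_mul, div_eq_mul_inv]
    _ ≤ ∑ D : Finset V with D.card ≤ m, ((Fintype.card V : ℝ)⁻¹) ^ D.card := by
        refine Finset.sum_le_sum fun D hD ↦ ?_
        rw [inv_pow]
        exact inv_anti₀ (by positivity) (pow_le_pow_right₀ hV (Finset.mem_filter.1 hD).2)
    _ ≤ ∑ D : Finset V, ((Fintype.card V : ℝ)⁻¹) ^ D.card :=
        Finset.sum_le_univ_sum_of_nonneg fun _ ↦ by positivity
    _ ≤ _ := sum_pow_card_le_exp (by positivity)

/-- The expansion of a typical graph `G ∈ G(V, p)`: every vertex has at most `(1 + ε) p |V|`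
neighbours, and every set `D` with `p |D| ≤ 1 / 4` has, up to a factor `1 - ε`, at least
`p |D| (1 - 2 p |D|) |V|` neighbours outside itself. -/
structure IsRegularExpander (G : SimpleGraph V) (p ε : ℝ) : Prop where
  card_newNeighbors_singleton_le (v : V) :
    ((newNeighbors G ∅ {v}).card : ℝ) ≤ (1 + ε) * (p * Fintype.card V)
  le_card_newNeighbors (D : Finset V) (hD : D.card * p ≤ 1 / 4) :
    (1 - ε) * (D.card * p * (1 - 2 * (D.card * p)) * Fintype.card V) ≤
      (newNeighbors G ∅ D).card

/-- Sets of size at most `s` cannot cover the neighbourhood of a set of size `m`: at least `2 * m`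
vertices stay uncovered. -/
def HasUncoveredNeighbors (G : SimpleGraph V) (s : ℝ) (m : ℕ) : Prop :=
  ∀ D A : Finset V, Disjoint D A → D.card ≤ s → A.card = m → 2 * m ≤ (newNeighbors G D A).card

variable {p : I} {ε : ℝ}

lemma binomialRandom_real_card_newNeighbors_singleton_le (hε : 0 ≤ ε) (hε2 : ε ≤ 2) (v : V) :
    G(V, p).real {G | (1 + ε) * (p * Fintype.card V) ≤ (newNeighbors G ∅ {v}).card} ≤
      Real.exp (-(ε ^ 2 * (p * Fintype.card V) / 4)) := by
  refine binomialRandom_real_le_card_newNeighbors (by simp) hε hε2 ?_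
  simp only [Finset.card_empty, Finset.card_singleton, Nat.cast_zero, Nat.cast_one, zero_add,
    pow_zero, pow_one, sub_sub_cancel]
  nlinarith [p.2.1]

lemma binomialRandom_real_card_newNeighbors_empty_le (hp : 1 ≤ p * (Fintype.card V : ℝ))
    (hε : 0 ≤ ε) {D : Finset V} (hD : D.card * (p : ℝ) ≤ 1 / 4) :
    G(V, p).real {G | ((newNeighbors G ∅ D).card : ℝ) ≤
        (1 - ε) * (D.card * p * (1 - 2 * (D.card * p)) * Fintype.card V)} ≤
      Real.exp (-(ε ^ 2 * (p * Fintype.card V) / 4)) ^ D.card := by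
  set x : ℝ := D.card * p
  have hx : 0 ≤ x := mul_nonneg (Nat.cast_nonneg _) p.2.1
  refine (binomialRandom_real_card_newNeighbors_le (by simp) hε
    (mul_nonneg (mul_nonneg hx (by linarith)) (Nat.cast_nonneg _)) ?_).trans ?_
  · have hcard : Fintype.card V * (1 - x) ≤ Fintype.card V - D.card := by
      nlinarith [(Nat.cast_nonneg D.card : (0 : ℝ) ≤ D.card)]
    simp only [Finset.card_empty, Nat.cast_zero, zero_add, pow_zero]
    calc x * (1 - 2 * x) * Fintype.card V ≤ x * (1 - x) ^ 2 * Fintype.card V := by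
          gcongr; nlinarith
      _ = Fintype.card V * (1 - x) * (x * (1 - x)) := by ring
      _ ≤ (Fintype.card V - D.card) * (1 - (1 - p) ^ D.card) := by
          gcongr
          · nlinarith
          · exact (mul_nonneg (Nat.cast_nonneg _) (by linarith)).trans hcard
          · exact mul_one_sub_le_one_sub_pow p.2.1 p.2.2 _
  · rw [← Real.exp_nat_mul, Real.exp_le_exp]
    have : 1 / 2 * (x * Fintype.card V) ≤ x * (1 - 2 * x) * Fintype.card V := by
      nlinarith [mul_nonneg hx (Nat.cast_nonneg (Fintype.card V))]
    nlinarith [mul_le_mul_of_nonneg_left this (sq_nonneg ε)]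

lemma binomialRandom_real_exists_card_newNeighbors_lt (hp : 1 ≤ p * (Fintype.card V : ℝ))
    (hε : 0 ≤ ε) :
    G(V, p).real {G | ∃ D : Finset V, D.card * (p : ℝ) ≤ 1 / 4 ∧ ((newNeighbors G ∅ D).card : ℝ) <
        (1 - ε) * (D.card * p * (1 - 2 * (D.card * p)) * Fintype.card V)} ≤
      Real.exp (Fintype.card V * Real.exp (-(ε ^ 2 * (p * Fintype.card V) / 4))) - 1 := by
  classical
  let T : Finset (Finset V) := {D | D ≠ ∅ ∧ D.card * (p : ℝ) ≤ 1 / 4}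
  refine (measureReal_le_sum_of_subset_biUnion (T := T) ?_ fun D hD ↦
    binomialRandom_real_card_newNeighbors_empty_le hp hε (Finset.mem_filter.1 hD).2.2).trans
    (sum_pow_card_le_exp_sub_one (Real.exp_nonneg _) (by simp [T]))
  rintro G ⟨D, hD, hlt⟩
  have hne : D ≠ ∅ := by
    rintro rfl
    simp at hlt
    linarith [(Nat.cast_nonneg _ : (0 : ℝ) ≤ ((newNeighbors G ∅ ∅).card : ℝ))]
  exact mem_biUnion (x := D) (Finset.mem_filter.2 ⟨Finset.mem_univ D, hne, hD⟩) hlt.le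

lemma binomialRandom_real_not_isRegularExpander_le (hp : 1 ≤ p * (Fintype.card V : ℝ))
    (hε : 0 ≤ ε) (hε2 : ε ≤ 2) :
    G(V, p).real {G | ¬ IsRegularExpander G p ε} ≤
      2 * (Real.exp (Fintype.card V * Real.exp (-(ε ^ 2 * (p * Fintype.card V) / 4))) - 1) := by
  have hdeg : G(V, p).real
      {G | ∃ v, (1 + ε) * (p * Fintype.card V) < (newNeighbors G ∅ {v}).card} ≤
      Real.exp (Fintype.card V * Real.exp (-(ε ^ 2 * (p * Fintype.card V) / 4))) - 1 := by
    refine (measureReal_le_sum_of_subset_biUnion (T := Finset.univ) ?_ fun v _ ↦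
      binomialRandom_real_card_newNeighbors_singleton_le hε hε2 v).trans ?_
    · rintro G ⟨v, hv⟩
      exact mem_biUnion (Finset.mem_univ v) hv.le
    · rw [Finset.sum_const, Finset.card_univ, nsmul_eq_mul]
      linarith [Real.add_one_le_exp
        (Fintype.card V * Real.exp (-(ε ^ 2 * (p * Fintype.card V) / 4)))]
  rw [two_mul]
  refine (measureReal_mono fun G hG ↦ ?_).trans <| (measureReal_union_le _ _).trans
    (add_le_add hdeg (binomialRandom_real_exists_card_newNeighbors_lt hp hε))
  by_contra h
  rw [mem_union, not_or] at h
  exact hG ⟨fun v ↦ not_lt.1 fun hv ↦ h.1 ⟨v, hv⟩, fun D hD ↦ not_lt.1 fun hlt ↦ h.2 ⟨D, hD, hlt⟩⟩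

lemma binomialRandom_real_not_hasUncoveredNeighbors_le [Nonempty V] {s μ : ℝ} {m : ℕ}
    (hs : s ≤ m) (hm : 4 * m ≤ μ)
    (hμ : ∀ a : ℕ, a ≤ s → μ ≤ (Fintype.card V - (a + m)) *
      ((1 - (p : ℝ)) ^ a - (1 - p) ^ (a + m))) :
    G(V, p).real {G | ¬ HasUncoveredNeighbors G s m} ≤
      (Real.exp 1 * (Fintype.card V : ℝ) ^ m) ^ 2 * Real.exp (-(μ / 8)) := by
  classical
  let T : Finset (Finset V × Finset V) := {q | Disjoint q.1 q.2 ∧ q.1.card ≤ s ∧ q.2.card = m}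
  let S : Finset (Finset V) := {D | D.card ≤ m}
  have hTS : T ⊆ S ×ˢ S := fun q hq ↦ by
    obtain ⟨-, h1, h2⟩ := (Finset.mem_filter.1 hq).2
    have : q.1.card ≤ m := by exact_mod_cast h1.trans hs
    simp [S, this, h2.le]
  have hcard : (T.card : ℝ) ≤ (Real.exp 1 * (Fintype.card V : ℝ) ^ m) ^ 2 := by
    calc (T.card : ℝ) ≤ S.card * S.card := by
          exact_mod_cast Finset.card_product S S ▸ Finset.card_le_card hTS
      _ ≤ _ := by rw [sq]; gcongr <;> exact card_filter_card_le_le m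
  have hprob : ∀ q ∈ T, G(V, p).real {G | ((newNeighbors G q.1 q.2).card : ℝ) ≤
      (1 - 1 / 2) * μ} ≤ Real.exp (-(μ / 8)) := fun q hq ↦ by
    obtain ⟨hdisj, h1, rfl⟩ := (Finset.mem_filter.1 hq).2
    refine (binomialRandom_real_card_newNeighbors_le hdisj (by norm_num)
      ((by positivity : (0 : ℝ) ≤ 4 * q.2.card).trans hm) (hμ _ h1)).trans_eq ?_
    ring_nf
  refine (measureReal_le_sum_of_subset_biUnion (fun G hG ↦ ?_) hprob).trans ?_
  · obtain ⟨D, A, hdisj, hD, hA, hlt⟩ : ∃ D A : Finset V, Disjoint D A ∧ D.card ≤ s ∧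
        A.card = m ∧ (newNeighbors G D A).card < 2 * m := by
      simpa [HasUncoveredNeighbors] using hG
    refine mem_biUnion (x := (D, A)) (by simp [T, hdisj, hD, hA]) (?_ : _ ≤ (1 - 1 / 2) * μ)
    have : ((newNeighbors G D A).card : ℝ) < 2 * m := by exact_mod_cast hlt
    linarith
  · rw [Finset.sum_const, nsmul_eq_mul]
    gcongr

end Expansion

/-! ### Balls and the diameter -/

section Ball

variable {V : Type*} {G : SimpleGraph V} {A : Set V} {u v : V} {i j : ℕ}

lemma mem_gBall_zero : v ∈ gBall G A 0 ↔ v ∈ A := by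
  simp [gBall]

lemma mem_gBall_succ :
    v ∈ gBall G A (j + 1) ↔ v ∈ gBall G A j ∨ ∃ w ∈ gBall G A j, G.Adj v w := by
  constructor
  · rintro ⟨u, hu, huv⟩
    obtain hlt | heq := huv.lt_or_eq
    · exact .inl ⟨u, hu, Order.le_of_lt_add_one (by exact_mod_cast hlt)⟩
    · obtain ⟨q, hq⟩ := exists_walk_of_edist_eq_coe heq
      have hnil : ¬ q.Nil := by rw [← Walk.length_eq_zero_iff]; simp [hq]
      refine .inr ⟨q.penultimate, ⟨u, hu, (edist_le q.dropLast).trans ?_⟩,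
        (q.adj_penultimate hnil).symm⟩
      simp [hq]
  · rintro (⟨u, hu, huv⟩ | ⟨w, ⟨u, hu, huw⟩, hvw⟩)
    · exact ⟨u, hu, huv.trans (by gcongr; exact j.le_succ)⟩
    · refine ⟨u, hu, (G.edist_triangle (v := w)).trans ?_⟩
      push_cast
      exact add_le_add huw (edist_le_one_iff_adj_or_eq.2 (.inl hvw.symm))

lemma gBall_subset_gBall_succ : gBall G A j ⊆ gBall G A (j + 1) :=
  fun _ hv ↦ mem_gBall_succ.2 (.inl hv)

lemma gBall_deleteIncidenceSet (hv : v ∉ gBall G A j) :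
    gBall (G.deleteIncidenceSet v) A j = gBall G A j := by
  induction j with
  | zero => ext; simp [mem_gBall_zero]
  | succ j ih =>
    ext x
    have hvj : v ∉ gBall G A j := fun h ↦ hv (gBall_subset_gBall_succ h)
    rw [mem_gBall_succ, mem_gBall_succ, ih hvj]
    refine or_congr_right (exists_congr fun w ↦ and_congr_right fun hw ↦ ?_)
    rw [deleteIncidenceSet_adj, and_iff_left_iff_imp]
    exact fun hxw ↦ ⟨fun hx ↦ hv (hx ▸ mem_gBall_succ.2 (.inr ⟨w, hw, hxw⟩)), fun h ↦ hvj (h ▸ hw)⟩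

/-- The set `gBall G A j` as a finset, for finite vertex sets. -/
noncomputable def ballFinset [Finite V] (G : SimpleGraph V) (A : Finset V) (j : ℕ) : Finset V :=
  (toFinite (gBall G A j)).toFinset

lemma mem_ballFinset [Finite V] {A : Finset V} : v ∈ ballFinset G A j ↔ v ∈ gBall G A j :=
  Finite.mem_toFinset _

lemma ballFinset_zero [Finite V] (G : SimpleGraph V) (A : Finset V) : ballFinset G A 0 = A := by
  ext
  simp [mem_ballFinset, mem_gBall_zero]

end Ball

section Diameter

open MeasureTheory ProbabilityTheory unitInterval

lemma measureReal_preimage_le_of_indepFun {Ω α β : Type*} [MeasurableSpace Ω] {P : Measure Ω}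
    [IsProbabilityMeasure P] [MeasurableSpace α] [MeasurableSpace β] {X : Ω → α} {Y : Ω → β}
    (hXY : IndepFun X Y P) (hX : Measurable X) (hY : Measurable Y) {E : α → Set β}
    (hE : MeasurableSet {z : α × β | z.2 ∈ E z.1}) {c : ℝ}
    (h : ∀ a, P.real (Y ⁻¹' E a) ≤ c) : P.real {ω | Y ω ∈ E (X ω)} ≤ c := by
  have hprod := (indepFun_iff_map_prod_eq_prod_map_map hX.aemeasurable hY.aemeasurable).1 hXY
  have := Measure.isProbabilityMeasure_map (μ := P) hX.aemeasurable
  have hc : 0 ≤ c := measureReal_nonneg.trans (h (X (nonempty_of_isProbabilityMeasure P).some))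
  have key : P {ω | Y ω ∈ E (X ω)} ≤ ENNReal.ofReal c := by
    calc P {ω | Y ω ∈ E (X ω)} = ((P.map X).prod (P.map Y)) {z | z.2 ∈ E z.1} := by
          rw [← hprod, Measure.map_apply (hX.prodMk hY) hE]; rfl
      _ = ∫⁻ a, P (Y ⁻¹' E a) ∂(P.map X) := by
          rw [Measure.prod_apply hE]
          refine lintegral_congr fun a ↦ ?_
          rw [Measure.map_apply hY (measurable_prodMk_left hE)]; rfl
      _ ≤ ∫⁻ _, ENNReal.ofReal c ∂(P.map X) := lintegral_mono fun a ↦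
          (ENNReal.le_ofReal_iff_toReal_le (measure_ne_top _ _) hc).2 (h a)
      _ = ENNReal.ofReal c := by simp
  exact ENNReal.toReal_le_of_le_ofReal hc key

variable {V : Type*} {p : I}

lemma indepFun_deleteIncidenceSet_adj [Finite V] (v : V) :
    IndepFun (fun G : SimpleGraph V ↦ G.deleteIncidenceSet v) (fun G w ↦ G.Adj v w) G(V, p) := by
  classical
  have := Fintype.ofFinite V
  let S : Finset (Sym2 V) := {e | v ∉ e}
  let T : Finset (Sym2 V) := {e | v ∈ e}
  have hST : Disjoint S T := Finset.disjoint_filter.2 fun _ _ h ↦ h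
  have h := iIndepFun_mem_edgeSet (V := V) (p := p).indepFun_finset S T hST (fun _ ↦ .of_discrete)
  have hφ : Measurable fun (f : S → Prop) ↦ fromEdgeSet {e | ∃ h : e ∈ S, f ⟨e, h⟩} :=
    .of_discrete
  have hψ : Measurable fun (f : T → Prop) (w : V) ↦ f ⟨s(v, w), by simp [T]⟩ := .of_discrete
  convert h.comp hφ hψ using 1
  · ext G a b
    simp only [deleteIncidenceSet_adj, ne_eq, Finset.mem_filter, Finset.mem_univ, true_and,
      Function.comp_apply, exists_prop, fromEdgeSet_adj, mem_ofPred_eq, Sym2.mem_iff, not_or,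
      mem_edgeSet, S]
    grind [SimpleGraph.Adj.ne]
  · rfl

/-- Conditioning on `G - v` reveals the ball `B(u, i)` as long as it avoids `v`, while the edges at
`v` remain independent. -/
lemma binomialRandom_real_notMem_gBall_succ_le [Finite V] (u v : V) (i : ℕ) (x : ℝ) :
    G(V, p).real {G | x ≤ (ballFinset G {u} i).card ∧ v ∉ gBall G {u} (i + 1)} ≤
      Real.exp (-(p * x)) := by
  let E (H : SimpleGraph V) : Set (V → Prop) :=
    {N | x ≤ (ballFinset H {u} i).card ∧ v ∉ ballFinset H {u} i ∧ ∀ w ∈ ballFinset H {u} i, ¬ N w}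
  have hE (H : SimpleGraph V) : G(V, p).real ((fun G w ↦ G.Adj v w) ⁻¹' E H) ≤
      Real.exp (-(p * x)) := by
    by_cases h : x ≤ (ballFinset H {u} i).card ∧ v ∉ ballFinset H {u} i
    · calc _ ≤ G(V, p).real {G | ∀ w ∈ ballFinset H {u} i, ¬ G.Adj v w} :=
            measureReal_mono fun G hG ↦ hG.2.2
        _ ≤ Real.exp (-(((ballFinset H {u} i).card) * p)) :=
            (binomialRandom_real_forall_not_adj h.2).trans_le (one_sub_pow_le_exp_neg p.2.2 _)
        _ ≤ _ := by
            rw [mul_comm]; gcongr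
            · exact p.2.1
            · exact h.1
    · have : E H = ∅ := eq_empty_of_forall_notMem fun N hN ↦ h ⟨hN.1, hN.2.1⟩
      simp [this, Real.exp_nonneg]
  refine (measureReal_mono fun G hG ↦ ?_).trans (measureReal_preimage_le_of_indepFun
    (indepFun_deleteIncidenceSet_adj v) .of_discrete .of_discrete .of_discrete hE)
  have hvi : v ∉ gBall G {u} i := fun h ↦ hG.2 (gBall_subset_gBall_succ h)
  have hball : ballFinset (G.deleteIncidenceSet v) {u} i = ballFinset G {u} i := by
    ext w; simp [mem_ballFinset, gBall_deleteIncidenceSet hvi]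
  refine ⟨?_, ?_, fun w hw hvw ↦ hG.2 (mem_gBall_succ.2 (.inr ⟨w, ?_, hvw⟩))⟩
  · simpa [hball] using hG.1
  · simpa [hball, mem_ballFinset] using hvi
  · simpa [hball, mem_ballFinset] using hw

lemma binomialRandom_real_exists_notMem_gBall_succ_le [Fintype V] (i : ℕ) (x : ℝ) :
    G(V, p).real {G | (∀ u, x ≤ (ballFinset G {u} i).card) ∧ ∃ u v, v ∉ gBall G {u} (i + 1)} ≤
      (Fintype.card V) ^ 2 * Real.exp (-(p * x)) := by
  refine (measureReal_le_sum_of_subset_biUnion (T := Finset.univ (α := V × V)) ?_ fun q _ ↦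
    binomialRandom_real_notMem_gBall_succ_le q.1 q.2 i x).trans_eq ?_
  · rintro G ⟨hx, u, v, hv⟩
    exact mem_biUnion (Finset.mem_univ (u, v)) ⟨hx u, hv⟩
  · simp [sq]

end Diameter

/-! ### Growth of balls in expanders -/

section Growth

variable {V : Type*} [Fintype V] {G : SimpleGraph V} {p d ε : ℝ} {A : Finset V} {j : ℕ}

lemma card_ballFinset_succ (G : SimpleGraph V) (A : Finset V) (j : ℕ) :
    (ballFinset G A (j + 1)).card =
      (ballFinset G A j).card + (newNeighbors G ∅ (ballFinset G A j)).card := by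
  have hdisj : Disjoint (ballFinset G A j) (newNeighbors G ∅ (ballFinset G A j)) :=
    Finset.disjoint_left.2 fun v hv hv' ↦ (mem_newNeighbors.1 hv').2.1 hv
  rw [← Finset.card_disjUnion _ _ hdisj]
  congr 1
  ext v
  simp only [mem_ballFinset, mem_gBall_succ, Finset.mem_disjUnion, mem_newNeighbors]
  grind

lemma card_newNeighbors_empty_le_sum (G : SimpleGraph V) (A : Finset V) :
    (newNeighbors G ∅ A).card ≤ ∑ v ∈ A, (newNeighbors G ∅ {v}).card := by
  classical
  refine (Finset.card_le_card fun v hv ↦ ?_).trans Finset.card_biUnion_le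
  obtain ⟨-, hvA, -, u, hu, hvu⟩ := mem_newNeighbors.1 hv
  exact Finset.mem_biUnion.2 ⟨u, hu, mem_newNeighbors.2
    ⟨by simp, by grind, by simp, u, by simp, hvu⟩⟩

lemma one_sub_two_mul_mul_le {x y b : ℝ} (hε1 : ε ≤ 1 / 2) (hx : x ≤ 1 / 16) (hy : 0 ≤ y)
    (hyε : y ≤ 1 / 16 * ε) (hb : b ≤ 4 * x) :
    (1 - 2 * ε) * (1 - 8 * x) ≤ (1 - ε) * (1 - 2 * b) * (1 - 8 * y) := by
  have hε : 0 ≤ ε := by linarith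
  have hpos : 0 ≤ (1 - ε) * (1 - 8 * y) := mul_nonneg (by linarith) (by linarith)
  calc (1 - 2 * ε) * (1 - 8 * x) ≤ (1 - ε) * (1 - 8 * y) * (1 - 8 * x) := by
        gcongr
        · linarith
        · linarith [mul_nonneg hε hy]
    _ ≤ (1 - ε) * (1 - 8 * y) * (1 - 2 * b) := by
        gcongr ?_ * ?_
        linarith
    _ = _ := by ring

namespace IsRegularExpander

lemma card_ballFinset_succ_le (h : IsRegularExpander G p ε) (hd : p * Fintype.card V = d)
    (hεd : 1 ≤ ε * d) :
    ((ballFinset G A (j + 1)).card : ℝ) ≤ (1 + 2 * ε) * d * (ballFinset G A j).card := by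
  have hnew : ((newNeighbors G ∅ (ballFinset G A j)).card : ℝ) ≤
      (ballFinset G A j).card * ((1 + ε) * d) := by
    calc ((newNeighbors G ∅ (ballFinset G A j)).card : ℝ)
        ≤ ∑ v ∈ ballFinset G A j, ((newNeighbors G ∅ {v}).card : ℝ) := by
          exact_mod_cast card_newNeighbors_empty_le_sum G _
      _ ≤ ∑ _v ∈ ballFinset G A j, (1 + ε) * d :=
          Finset.sum_le_sum fun v _ ↦ hd ▸ h.card_newNeighbors_singleton_le v
      _ = _ := by rw [Finset.sum_const, nsmul_eq_mul]
  rw [card_ballFinset_succ]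
  push_cast
  linarith [mul_le_mul_of_nonneg_left hεd (Nat.cast_nonneg (ballFinset G A j).card)]

lemma card_ballFinset_le (h : IsRegularExpander G p ε) (hd : p * Fintype.card V = d)
    (hd0 : 0 ≤ d) (hε : 0 ≤ ε) (hεd : 1 ≤ ε * d) (A : Finset V) (j : ℕ) :
    ((ballFinset G A j).card : ℝ) ≤ A.card * ((1 + 2 * ε) ^ j * d ^ j) := by
  induction j with
  | zero => simp [ballFinset_zero]
  | succ j ih =>
    calc ((ballFinset G A (j + 1)).card : ℝ) ≤ (1 + 2 * ε) * d * (ballFinset G A j).card :=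
          h.card_ballFinset_succ_le hd hεd
      _ ≤ (1 + 2 * ε) * d * (A.card * ((1 + 2 * ε) ^ j * d ^ j)) := by gcongr
      _ = A.card * ((1 + 2 * ε) ^ (j + 1) * d ^ (j + 1)) := by ring

lemma le_card_ballFinset_succ (h : IsRegularExpander G p ε) (hd : p * Fintype.card V = d)
    (hA : (ballFinset G A j).card * p ≤ 1 / 4) :
    (1 - ε) * (1 - 2 * ((ballFinset G A j).card * p)) * d * (ballFinset G A j).card ≤
      (ballFinset G A (j + 1)).card := by
  have hnew := h.le_card_newNeighbors _ hA
  rw [card_ballFinset_succ, ← hd]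
  push_cast
  linarith [(ballFinset G A j).card.cast_nonneg (α := ℝ)]

lemma card_ballFinset_mul_le (h : IsRegularExpander G p ε) (hd : p * Fintype.card V = d)
    (hp : 0 ≤ p) (hd1 : 1 ≤ d) (hε : 0 ≤ ε) (hεd : 1 ≤ ε * d) (hA : A.card ≤ 2)
    (hj : (1 + 2 * ε) ^ j ≤ 2) :
    (ballFinset G A j).card * p ≤ 4 * (d ^ (j + 1) / Fintype.card V) := by
  have hn : (Fintype.card V : ℝ) ≠ 0 := by
    intro hn
    linarith [mul_zero p, hn ▸ hd]
  have hA' : (A.card : ℝ) ≤ 2 := by exact_mod_cast hA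
  calc (ballFinset G A j).card * p ≤ A.card * ((1 + 2 * ε) ^ j * d ^ j) * p := by
        gcongr; exact h.card_ballFinset_le hd (by linarith) hε hεd A j
    _ ≤ 2 * (2 * d ^ j) * p := by gcongr
    _ = 4 * (d ^ (j + 1) / Fintype.card V) := by rw [pow_succ, ← hd]; field_simp; ring

/-- The factor `1 - 8 d ^ j / n` accounts for the overlap of the neighbourhoods of the last
sphere; in earlier rounds the overlap is absorbed into `1 - 2 ε`. -/
lemma le_card_ballFinset (h : IsRegularExpander G p ε) (hd : p * Fintype.card V = d) (hp : 0 ≤ p)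
    (hd1 : 1 ≤ d) (hε : 0 ≤ ε) (hε1 : ε ≤ 1 / 2) (hεd : 1 ≤ ε * d) (hA : A.card ≤ 2)
    (hj : (1 + 2 * ε) ^ j ≤ 2) (hdj : d ^ j / Fintype.card V ≤ 1 / 16) :
    A.card * ((1 - 2 * ε) ^ j * (1 - 8 * (d ^ j / Fintype.card V)) * d ^ j) ≤
      (ballFinset G A j).card := by
  induction j with
  | zero =>
    rw [ballFinset_zero]
    refine mul_le_of_le_one_right (by positivity) ?_
    simp only [pow_zero, one_mul, mul_one, sub_le_self_iff]
    positivity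
  | succ j ih =>
    set n : ℝ := (Fintype.card V : ℝ)
    set b : ℝ := ((ballFinset G A j).card : ℝ)
    set x := d ^ (j + 1) / n
    have hjj : (1 + 2 * ε) ^ j ≤ 2 := (pow_le_pow_right₀ (by linarith) j.le_succ).trans hj
    have hxj : d ^ j / n ≤ 1 / 16 * ε := by
      calc d ^ j / n = d ^ j / n * 1 := by ring
        _ ≤ d ^ j / n * (ε * d) := by gcongr
        _ = x * ε := by ring
        _ ≤ 1 / 16 * ε := by gcongr
    have hdjj : d ^ j / n ≤ 1 / 16 :=
      (div_le_div_of_nonneg_right (pow_le_pow_right₀ hd1 j.le_succ) (Nat.cast_nonneg _)).trans hdj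
    have hbp : b * p ≤ 4 * x := h.card_ballFinset_mul_le hd hp hd1 hε hεd hA hjj
    have hfac := one_sub_two_mul_mul_le hε1 hdj (by positivity) hxj hbp
    have h12 : 0 ≤ 1 - 2 * ε := by linarith
    calc A.card * ((1 - 2 * ε) ^ (j + 1) * (1 - 8 * x) * d ^ (j + 1))
        = (1 - 2 * ε) * (1 - 8 * x) * (A.card * (1 - 2 * ε) ^ j * d ^ (j + 1)) := by ring
      _ ≤ (1 - ε) * (1 - 2 * (b * p)) * (1 - 8 * (d ^ j / n)) *
          (A.card * (1 - 2 * ε) ^ j * d ^ (j + 1)) := by gcongr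
      _ = (1 - ε) * (1 - 2 * (b * p)) * d *
          (A.card * ((1 - 2 * ε) ^ j * (1 - 8 * (d ^ j / n)) * d ^ j)) := by ring
      _ ≤ (1 - ε) * (1 - 2 * (b * p)) * d * b := by
          have : 0 ≤ (1 - ε) * (1 - 2 * (b * p)) := mul_nonneg (by linarith) (by linarith)
          gcongr
          exact ih hjj hdjj
      _ ≤ _ := h.le_card_ballFinset_succ hd (by linarith)

end IsRegularExpander

end Growth

section Distance

variable {V : Type*} {G : SimpleGraph V} {j : ℕ}

lemma ballFinset_pair [Finite V] [DecidableEq V] (u v : V) :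
    ballFinset G {u, v} j = ballFinset G {u} j ∪ ballFinset G {v} j := by
  ext x; simp [mem_ballFinset, gBall]

lemma connected_of_forall_mem_gBall [Nonempty V] (h : ∀ u v, v ∈ gBall G {u} j) :
    G.Connected where
  preconnected u v := by
    obtain ⟨_, rfl, huv⟩ := h u v
    exact reachable_of_edist_ne_top (ne_top_of_le_ne_top (ENat.natCast_ne_top j) huv)

lemma mem_gBall_singleton (hG : G.Connected) {u v : V} :
    v ∈ gBall G {u} j ↔ G.dist u v ≤ j := by
  simp only [gBall, mem_singleton_iff, exists_eq_left]
  change G.edist u v ≤ j ↔ _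
  rw [← (hG u v).coe_dist_eq_edist]
  exact Nat.cast_le

lemma two_mul_card_ballFinset_pair_le [Finite V] [DecidableEq V] (hG : G.Connected)
    (u v : V) (j : ℕ) :
    2 * (ballFinset G {u, v} j).card ≤ (ballFinset G {u} j).card + (ballFinset G {v} j).card +
      {s : V | G.dist s u ≠ G.dist s v}.ncard := by
  set B := ballFinset G {u} j
  set C := ballFinset G {v} j
  have hsep : (B \ C).card + (C \ B).card ≤ {s : V | G.dist s u ≠ G.dist s v}.ncard := by
    rw [← Finset.card_union_of_disjoint disjoint_sdiff_sdiff, ← ncard_coe_finset]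
    refine ncard_le_ncard (fun s hs (h : G.dist s u = G.dist s v) ↦ ?_) (toFinite _)
    have hBC : s ∈ B ↔ s ∈ C := by
      rw [mem_ballFinset, mem_ballFinset, Finset.coe_singleton, Finset.coe_singleton,
        mem_gBall_singleton hG, mem_gBall_singleton hG, dist_comm, h, dist_comm]
    grind
  rw [ballFinset_pair]
  grind [Finset.card_union_add_card_inter B C, Finset.card_sdiff_add_card_inter B C,
    Finset.card_sdiff_add_card_inter C B, Finset.inter_comm B C]

lemma IsRegularExpander.ncard_dist_eq_le [Fintype V] {p d ε η : ℝ}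
    (h : IsRegularExpander G p ε) (hG : G.Connected) (hd : p * Fintype.card V = d) (hp : 0 ≤ p)
    (hd1 : 1 ≤ d) (hε : 0 ≤ ε) (hε1 : ε ≤ 1 / 2) (hεd : 1 ≤ ε * d) (hη : η ≤ 1)
    (hdj : d ^ j / Fintype.card V ≤ 1 / 16) (hup : (1 + 2 * ε) ^ j ≤ 1 + η)
    (hlo : 1 - η ≤ (1 - 2 * ε) ^ j * (1 - 8 * (d ^ j / Fintype.card V))) {u v : V}
    (huv : u ≠ v) :
    {s | G.dist s u = G.dist s v}.ncard ≤
      (1 - (2 - 6 * η) * (d ^ j / Fintype.card V)) * Fintype.card V := by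
  classical
  have hcard : (Fintype.card V : ℝ) ≠ 0 := by
    have : Nonempty V := ⟨u⟩
    exact_mod_cast Fintype.card_ne_zero
  have hd0 : 0 ≤ d := by linarith
  have hsingle (w : V) : ((ballFinset G {w} j).card : ℝ) ≤ (1 + η) * d ^ j := by
    refine (h.card_ballFinset_le hd hd0 hε hεd {w} j).trans ?_
    simpa using mul_le_mul_of_nonneg_right hup (pow_nonneg hd0 j)
  have hpair : 2 * ((1 - η) * d ^ j) ≤ (ballFinset G {u, v} j).card := by
    refine le_trans ?_ (h.le_card_ballFinset hd hp hd1 hε hε1 hεd Finset.card_le_two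
      (hup.trans (by linarith)) hdj)
    rw [Finset.card_pair huv, Nat.cast_two]
    gcongr
  have hne : 2 * ((ballFinset G {u, v} j).card : ℝ) ≤ (ballFinset G {u} j).card +
      (ballFinset G {v} j).card + {s | G.dist s u ≠ G.dist s v}.ncard := by
    exact_mod_cast two_mul_card_ballFinset_pair_le hG u v j
  have hcompl : ({s | G.dist s u = G.dist s v}.ncard : ℝ) +
      {s | G.dist s u ≠ G.dist s v}.ncard = Fintype.card V := by
    rw [← Nat.card_eq_fintype_card]
    exact_mod_cast ncard_add_ncard_compl {s | G.dist s u = G.dist s v}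
  rw [sub_mul, one_mul, mul_assoc, div_mul_cancel₀ _ hcard]
  linarith [hsingle u, hsingle v]

end Distance

/-! ### Winning strategies for the cops -/

lemma exists_card_eq_card_filter_forall_le {α V : Type*} [Fintype V] (P : Finset α)
    (r : α → V → Prop) [∀ x s, Decidable (r x s)] {q : ℝ} {k : ℕ} (hk : k ≤ Fintype.card V)
    (hq : ∀ x ∈ P, {s | r x s}.ncard ≤ q * Fintype.card V) :
    ∃ S : Finset V, S.card = k ∧ ({x ∈ P | ∀ s ∈ S, r x s}.card : ℝ) ≤ P.card * q ^ k := by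
  classical
  have hsum : ∑ f : Fin k → V, ({x ∈ P | ∀ j, r x (f j)}.card : ℝ) ≤
      ∑ _f : Fin k → V, P.card * q ^ k := by
    calc ∑ f : Fin k → V, ({x ∈ P | ∀ j, r x (f j)}.card : ℝ)
        = ∑ x ∈ P, ({f : Fin k → V | ∀ j, r x (f j)} : Finset _).card := by
          exact_mod_cast Finset.sum_card_bipartiteAbove_eq_sum_card_bipartiteBelow
            fun (f : Fin k → V) x ↦ ∀ j, r x (f j)
      _ = ∑ x ∈ P, ({s | r x s}.ncard : ℝ) ^ k := by
          push_cast
          refine Finset.sum_congr rfl fun x _ ↦ ?_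
          rw [ncard_eq_toFinset_card', ← Nat.cast_pow, ← Fintype.card_piFinset_const]
          congr 2
          ext f
          simp
      _ ≤ ∑ _x ∈ P, (q * Fintype.card V) ^ k :=
          Finset.sum_le_sum fun x hx ↦ pow_le_pow_left₀ (Nat.cast_nonneg _) (hq x hx) k
      _ = ∑ _f : Fin k → V, P.card * q ^ k := by
          simp only [Finset.sum_const, Finset.card_univ, Fintype.card_fun, Fintype.card_fin,
            nsmul_eq_mul, Nat.cast_pow]
          ring
  have : Nonempty (Fin k → V) := by
    obtain ⟨e⟩ := Function.Embedding.nonempty_of_card_le (α := Fin k) (β := V) (by simpa using hk)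
    exact ⟨e⟩
  obtain ⟨f, -, hf⟩ := Finset.exists_le_of_sum_le Finset.univ_nonempty hsum
  obtain ⟨S, hfS, -, hS⟩ := Finset.exists_subsuperset_card_eq
    (Finset.subset_univ (Finset.univ.image f))
    (by simpa using Finset.card_image_le (s := Finset.univ) (f := f)) (by simpa using hk)
  refine ⟨S, hS, le_trans ?_ hf⟩
  gcongr with x
  exact fun h j ↦ h _ (hfS (Finset.mem_image_of_mem f (Finset.mem_univ j)))

section Cops

variable {V : Type*} {G : SimpleGraph V} {k : ℕ}

lemma probe_eq_probe_iff {S : Finset V} {u v : V} :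
    probe G S u = probe G S v ↔ ∀ s ∈ S, G.dist s u = G.dist s v := by
  classical
  simp only [probe, Prod.mk.injEq, true_and, funext_iff]
  grind

open Classical in
/-- The vertices at which the robber may have been probed last, given the history `h` of the
probe results; these are all the vertices if `h` is empty. -/
noncomputable def consistentPositions [Fintype V] (G : SimpleGraph V)
    (h : List (Finset V × (V → ℕ))) : Finset V :=
  h.foldl (fun X r ↦ {v ∈ ballFinset G X 1 | probe G r.1 v = r}) Finset.univ

open Classical in
lemma consistentPositions_append_singleton [Fintype V] (h : List (Finset V × (V → ℕ)))
    (r : Finset V × (V → ℕ)) :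
    consistentPositions G (h ++ [r]) =
      {v ∈ ballFinset G (consistentPositions G h) 1 | probe G r.1 v = r} := by
  simp [consistentPositions, List.foldl_append]

lemma mem_consistentPositions_gameHistory_succ [Fintype V] (σ : CopStrategy V) {w : ℕ → V}
    (hw : IsRobberWalk G w) (t : ℕ) :
    w t ∈ consistentPositions G (gameHistory G σ w (t + 1)) := by
  classical
  suffices hball : w t ∈ gBall G (consistentPositions G (gameHistory G σ w t)) 1 by
    rw [gameHistory, consistentPositions_append_singleton, Finset.mem_filter, mem_ballFinset]
    exact ⟨hball, rfl⟩
  rw [mem_gBall_succ, mem_gBall_zero]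
  cases t with
  | zero => simp [gameHistory, consistentPositions]
  | succ t =>
    have ih := mem_consistentPositions_gameHistory_succ σ hw t
    obtain hstay | hmove := hw t
    · exact .inl (hstay ▸ ih)
    · exact .inr ⟨w t, mem_gBall_zero.2 ih, hmove.symm⟩

lemma copsWin_of_forall_exists_shrinking [Finite V]
    (h : ∀ X : Finset V, ∃ S : Finset V, S.card = k ∧ ∀ C ⊆ ballFinset G X 1,
      (∀ u ∈ C, ∀ v ∈ C, ∀ s ∈ S, G.dist s u = G.dist s v) → 1 < C.card → C.card < X.card) :
    CopsWin G k := by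
  classical
  have := Fintype.ofFinite V
  choose S hS hshrink using h
  let σ : CopStrategy V := fun h ↦ S (consistentPositions G h)
  refine ⟨σ, fun h ↦ hS _, fun w hw ↦ ?_⟩
  let C (t : ℕ) : Finset V := consistentPositions G (gameHistory G σ w t)
  have hC (t : ℕ) : C (t + 1) =
      {v ∈ ballFinset G (C t) 1 | probe G (S (C t)) v = probe G (S (C t)) (w t)} := by
    simp only [C, gameHistory, consistentPositions_append_singleton]
    rfl
  obtain ⟨t, ht⟩ : ∃ t, (C (t + 1)).card ≤ 1 := by
    by_contra! hlarge
    refine not_strictAnti_of_wellFoundedLT (fun t ↦ (C t).card) (strictAnti_nat_of_succ_lt fun t ↦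
      hshrink (C t) (C (t + 1)) (hC t ▸ Finset.filter_subset _ _) (fun u hu v hv ↦ ?_) (hlarge t))
    rw [hC, Finset.mem_filter] at hu hv
    exact probe_eq_probe_iff.1 (hu.2.trans hv.2.symm)
  refine ⟨t, fun w' hw' hhist ↦ Finset.card_le_one.1 ht _ ?_ _ ?_⟩
  · simpa only [C, hhist] using mem_consistentPositions_gameHistory_succ σ hw' t
  · exact mem_consistentPositions_gameHistory_succ σ hw t

/-- A random set of `k` sensors fails to separate only a fraction `q ^ k` of the pairs of
candidates, too few for a class of indistinguishable candidates to survive the expansion by `Δ`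
without shrinking. -/
lemma copsWin_of_forall_ncard_dist_eq_le [Fintype V] {q Δ : ℝ}
    (hk : k ≤ Fintype.card V) (hq : 0 ≤ q)
    (hsep : ∀ u v, u ≠ v → {s | G.dist s u = G.dist s v}.ncard ≤ q * Fintype.card V)
    (hΔ : ∀ X, ((ballFinset G X 1).card : ℝ) ≤ Δ * X.card) (hqΔ : Δ ^ 2 * q ^ k ≤ 1 / 4) :
    CopsWin G k := by
  classical
  refine copsWin_of_forall_exists_shrinking fun X ↦ ?_
  obtain ⟨S, hS, hcard⟩ := exists_card_eq_card_filter_forall_le (ballFinset G X 1).offDiag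
    (fun x s ↦ G.dist s x.1 = G.dist s x.2) hk
    fun x hx ↦ hsep x.1 x.2 (Finset.mem_offDiag.1 hx).2.2
  refine ⟨S, hS, fun C hCX hC hC1 ↦ ?_⟩
  have hoff : (C.offDiag.card : ℝ) ≤ (X.card : ℝ) ^ 2 / 4 := by
    calc (C.offDiag.card : ℝ)
        ≤ {x ∈ (ballFinset G X 1).offDiag | ∀ s ∈ S, G.dist s x.1 = G.dist s x.2}.card := by
          gcongr
          intro x hx
          have ⟨h1, h2, hne⟩ := Finset.mem_offDiag.1 hx
          exact Finset.mem_filter.2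
            ⟨Finset.mem_offDiag.2 ⟨hCX h1, hCX h2, hne⟩, hC _ h1 _ h2⟩
      _ ≤ (ballFinset G X 1).offDiag.card * q ^ k := by convert hcard
      _ ≤ (Δ * X.card) ^ 2 * q ^ k := by
          gcongr
          refine le_trans ?_ (pow_le_pow_left₀ (Nat.cast_nonneg _) (hΔ X) 2)
          rw [Finset.offDiag_card, sq]
          exact_mod_cast Nat.sub_le _ _
      _ = (Δ ^ 2 * q ^ k) * (X.card : ℝ) ^ 2 := by ring
      _ ≤ 1 / 4 * (X.card : ℝ) ^ 2 := by gcongr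
      _ = (X.card : ℝ) ^ 2 / 4 := by ring
  have hC2 : (2 : ℝ) ≤ C.card := by exact_mod_cast hC1
  rw [Finset.offDiag_card, Nat.cast_sub (Nat.le_mul_self _)] at hoff
  push_cast at hoff
  by_contra! hle
  have : (X.card : ℝ) ≤ C.card := by exact_mod_cast hle
  nlinarith

end Cops

/-! ### Evasion strategies for the robber -/

section Robber

variable {V : Type*} {G : SimpleGraph V} {k : ℕ}

lemma exists_isRobberWalk_extend {w : ℕ → V} (hw : IsRobberWalk G w) {t : ℕ} {x : V}
    (hx : G.Adj (w t) x) :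
    ∃ w' : ℕ → V, IsRobberWalk G w' ∧ w' (t + 1) = x ∧ ∀ j ≤ t, w' j = w j := by
  refine ⟨fun j ↦ if j ≤ t then w j else x, fun j ↦ ?_, by simp, fun j hj ↦ if_pos hj⟩
  obtain hj | rfl | hj := lt_trichotomy j t
  · simpa [hj.le, Nat.succ_le_of_lt hj] using hw j
  · simpa using .inr hx
  · simp [hj.not_ge, (hj.trans j.lt_succ_self).not_ge]

lemma isClosed_setOf_isRobberWalk [TopologicalSpace V] [DiscreteTopology V] :
    IsClosed {w : ℕ → V | IsRobberWalk G w} := by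
  simp only [IsRobberWalk, ofPred_forall]
  refine isClosed_iInter fun t ↦ ?_
  exact (isClosed_discrete {x : V × V | x.2 = x.1 ∨ G.Adj x.1 x.2}).preimage
    (f := fun w : ℕ → V ↦ (w t, w (t + 1))) (by fun_prop)

lemma exists_isRobberWalk_forall_mem [Finite V] (U : ℕ → Set V)
    (h : ∀ T, ∃ w, IsRobberWalk G w ∧ ∀ j ≤ T, w j ∈ U j) :
    ∃ w, IsRobberWalk G w ∧ ∀ j, w j ∈ U j := by
  let _ : TopologicalSpace V := ⊥
  have : DiscreteTopology V := ⟨rfl⟩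
  let W (T : ℕ) : Set (ℕ → V) := {w | IsRobberWalk G w} ∩ ⋂ j ≤ T, {w | w j ∈ U j}
  have hclosed (T : ℕ) : IsClosed (W T) :=
    isClosed_setOf_isRobberWalk.inter (isClosed_iInter fun j ↦ isClosed_iInter fun _ ↦
      (isClosed_discrete (U j)).preimage (continuous_apply j))
  obtain ⟨w, hw⟩ := IsCompact.nonempty_iInter_of_sequence_nonempty_isCompact_isClosed W
    (fun T w hw ↦ ⟨hw.1, mem_iInter₂.2 fun j hj ↦ mem_iInter₂.1 hw.2 j (by omega)⟩)
    (fun T ↦ (h T).imp fun w hw ↦ ⟨hw.1, mem_iInter₂.2 hw.2⟩) (hclosed 0).isCompact hclosed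
  rw [mem_iInter] at hw
  exact ⟨w, (hw 0).1, fun j ↦ mem_iInter₂.1 (hw j).2 j le_rfl⟩

open Classical in
/-- The history of a game in which the cops play `σ` and all sensors always report the same
distance `r`. -/
noncomputable def constHistory (σ : CopStrategy V) (r : ℕ) : ℕ → List (Finset V × (V → ℕ))
  | 0 => []
  | t + 1 => constHistory σ r t ++
      [(σ (constHistory σ r t), fun s ↦ if s ∈ σ (constHistory σ r t) then r else 0)]

lemma gameHistory_eq_constHistory (σ : CopStrategy V) (r : ℕ) (w : ℕ → V) (t : ℕ)
    (h : ∀ j < t, ∀ s ∈ σ (constHistory σ r j), G.dist s (w j) = r) :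
    gameHistory G σ w t = constHistory σ r t := by
  induction t with
  | zero => rfl
  | succ t ih =>
    rw [gameHistory, constHistory, ih fun j hj ↦ h j (by omega)]
    simp only [probe, List.append_cancel_left_eq, List.cons.injEq, Prod.mk.injEq, true_and,
      and_true]
    ext s
    split_ifs with hs
    · exact h t t.lt_succ_self s hs
    · rfl

/-- The set of final vertices of the robber walks `w 0, …, w t` with `w j ∈ U j` for all
`j ≤ t`. -/
def reachableWithin (G : SimpleGraph V) (U : ℕ → Set V) (t : ℕ) : Set V :=
  {x | ∃ w, IsRobberWalk G w ∧ w t = x ∧ ∀ j ≤ t, w j ∈ U j}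

lemma subset_reachableWithin_zero (U : ℕ → Set V) : U 0 ⊆ reachableWithin G U 0 :=
  fun x hx ↦ ⟨fun _ ↦ x, fun _ ↦ .inl rfl, rfl, by simpa using hx⟩

lemma mem_reachableWithin_succ {U : ℕ → Set V} {t : ℕ} {x y : V}
    (hx : x ∈ reachableWithin G U t) (hxy : G.Adj x y) (hy : y ∈ U (t + 1)) :
    y ∈ reachableWithin G U (t + 1) := by
  obtain ⟨w, hw, rfl, hwU⟩ := hx
  obtain ⟨w', hw', rfl, heq⟩ := exists_isRobberWalk_extend hw hxy
  refine ⟨w', hw', rfl, fun j hj ↦ ?_⟩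
  obtain hj | rfl := Nat.le_succ_iff.1 hj
  · exact heq j hj ▸ hwU j hj
  · exact hy

/-- The robber survives on walks along which every sensor reports `r` in every round, so that the
history carries no information; finiteness of `V` lets one pass to an infinite walk. -/
lemma not_copsWin_of_forall_exists_adj_dist_eq [Finite V] (r : ℕ) {a : ℕ} (ha : 2 ≤ a)
    (haV : a ≤ Nat.card V)
    (h : ∀ (S : Finset V) (A : Set V), S.card = k → a ≤ A.ncard → ∃ B : Set V, a ≤ B.ncard ∧
      ∀ u ∈ B, (∃ x ∈ A, G.Adj x u) ∧ ∀ s ∈ S, G.dist s u = r) : ¬ CopsWin G k := by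
  rintro ⟨σ, hσ, hwin⟩
  let U (t : ℕ) : Set V := {u | ∀ s ∈ σ (constHistory σ r t), G.dist s u = r}
  have hlarge (t : ℕ) : a ≤ (reachableWithin G U t).ncard := by
    induction t with
    | zero =>
      obtain ⟨B, haB, hB⟩ := h (σ (constHistory σ r 0)) univ (hσ _) (by rwa [ncard_univ])
      exact haB.trans (ncard_le_ncard
        (fun u hu ↦ subset_reachableWithin_zero U (hB u hu).2) (toFinite _))
    | succ t ih =>
      obtain ⟨B, haB, hB⟩ := h (σ (constHistory σ r (t + 1))) _ (hσ _) ih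
      refine haB.trans (ncard_le_ncard (fun u hu ↦ ?_) (toFinite _))
      obtain ⟨⟨x, hx, hxu⟩, hu⟩ := hB u hu
      exact mem_reachableWithin_succ hx hxu hu
  have hhist (w : ℕ → V) (t : ℕ) (hw : ∀ j ≤ t, w j ∈ U j) :
      gameHistory G σ w (t + 1) = constHistory σ r (t + 1) :=
    gameHistory_eq_constHistory σ r w _ fun j hj ↦ hw j (by omega)
  obtain ⟨w, hw, hwU⟩ := exists_isRobberWalk_forall_mem (G := G) U fun T ↦ by
    obtain ⟨x, w, hw, -, hwU⟩ := nonempty_of_ncard_ne_zero (s := reachableWithin G U T)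
      (by have := hlarge T; omega)
    exact ⟨w, hw, hwU⟩
  obtain ⟨t, ht⟩ := hwin w hw
  obtain ⟨x, ⟨w', hw', rfl, hw'U⟩, hne⟩ :=
    exists_ne_of_one_lt_ncard (lt_of_lt_of_le ha (hlarge t)) (w t)
  exact hne (ht w' hw' ((hhist w' t hw'U).trans (hhist w t fun j _ ↦ hwU j).symm))

lemma dist_eq_of_mem_newNeighbors_ballFinset [Fintype V]
    {j : ℕ} (hdiam : ∀ u v, v ∈ gBall G {u} (j + 2)) {S A : Finset V} {u : V}
    (hu : u ∈ newNeighbors G (ballFinset G S j) A) {s : V} (hs : s ∈ S) :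
    G.dist s u = j + 2 := by
  have : Nonempty V := ⟨u⟩
  have hG := connected_of_forall_mem_gBall hdiam
  refine le_antisymm ((mem_gBall_singleton hG).1 (hdiam s u)) (not_lt.1 fun hlt ↦ ?_)
  obtain ⟨huD, -, hnadj, -⟩ := mem_newNeighbors.1 hu
  have hball : u ∈ gBall G S (j + 1) :=
    ⟨s, hs, by simpa [gBall] using (mem_gBall_singleton hG).2 (Nat.le_of_lt_succ hlt)⟩
  obtain h | ⟨x, hx, hxu⟩ := mem_gBall_succ.1 hball
  · exact huD (mem_ballFinset.2 h)
  · exact hnadj x (mem_ballFinset.2 hx) hxu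

lemma not_copsWin_of_hasUncoveredNeighbors [Fintype V] {p ε d s : ℝ} {j m : ℕ}
    (hG : IsRegularExpander G p ε) (hd : p * Fintype.card V = d) (hd0 : 0 ≤ d) (hε : 0 ≤ ε)
    (hεd : 1 ≤ ε * d) (hdiam : ∀ u v, v ∈ gBall G {u} (j + 2))
    (hN : HasUncoveredNeighbors G s m) (hm : 1 ≤ m) (hmV : 2 * m ≤ Fintype.card V) (hs : s ≤ m)
    (hk : k * ((1 + 2 * ε) ^ j * d ^ j) ≤ s) : ¬ CopsWin G k := by
  classical
  refine not_copsWin_of_forall_exists_adj_dist_eq (j + 2) (a := 2 * m) (by omega)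
    (by rwa [Nat.card_eq_fintype_card]) fun S A hS hA ↦ ?_
  set D := ballFinset G S j
  have hDs : (D.card : ℝ) ≤ s := (hG.card_ballFinset_le hd hd0 hε hεd S j).trans (hS ▸ hk)
  have hDm : D.card ≤ m := by exact_mod_cast hDs.trans hs
  have hAD : m ≤ (A.toFinset \ D).card := by
    rw [ncard_eq_toFinset_card'] at hA
    have := Finset.le_card_sdiff D A.toFinset
    omega
  obtain ⟨A', hA'A, hA'⟩ := Finset.exists_subset_card_eq hAD
  have hdisj : Disjoint D A' := Finset.disjoint_sdiff.mono_right hA'A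
  refine ⟨newNeighbors G D A', by simpa using hN D A' hdisj hDs hA', fun u hu ↦
    ⟨?_, fun s hs ↦ dist_eq_of_mem_newNeighbors_ballFinset hdiam hu hs⟩⟩
  obtain ⟨-, -, -, x, hx, hux⟩ := mem_newNeighbors.1 hu
  exact ⟨x, mem_toFinset.1 (Finset.mem_sdiff.1 (hA'A hx)).1, hux.symm⟩

end Robber

/-! ### The parameter regime -/

/-- The relations between `n`, `p` and the average degree `d = p n` that hold for all large `n`
under the hypotheses of the theorem with `i = j + 1`, for a given precision `ε`. -/
structure AsymptoticRegime (n : ℕ) (p d ε : ℝ) (j : ℕ) : Prop where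
  mul_eq : p * n = d
  p_le : p ≤ ε / 8
  ε_pos : 0 < ε
  ε_le_one : ε ≤ 1
  le_mul_log : 1000 ≤ ε * Real.log n
  log_pow_le : Real.log n ^ 8 ≤ d
  pow_div_le : d ^ (j + 1) / n ≤ ε / 512
  log_sq_le_rpow : 320 * Real.log n ^ 2 ≤ d ^ (ε / 4)

/-- The relative error allowed in the expansion of the neighbourhoods in `G(n,p)`: small enough
to be compounded `log n` times, large enough for the Chernoff bounds. -/
noncomputable def slack (n : ℕ) : ℝ := 1 / Real.log n ^ 3

namespace AsymptoticRegime

variable {n j : ℕ} {p d ε : ℝ}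

lemma le_log (h : AsymptoticRegime n p d ε j) : 1000 ≤ Real.log n := by
  have hL : 0 < Real.log n := by
    by_contra! hL
    nlinarith [h.le_mul_log, h.ε_pos]
  nlinarith [h.le_mul_log, h.ε_le_one]

lemma one_div_log_sq_le (h : AsymptoticRegime n p d ε j) : 1 / Real.log n ^ 2 ≤ ε / 1000 := by
  have hL := h.le_log
  rw [div_le_div_iff₀ (by positivity) (by norm_num)]
  nlinarith [h.le_mul_log]

lemma n_pos (h : AsymptoticRegime n p d ε j) : (0 : ℝ) < n := by
  rw [Nat.cast_pos, Nat.pos_iff_ne_zero]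
  rintro rfl
  exact absurd h.le_log (by norm_num)

lemma le_n (h : AsymptoticRegime n p d ε j) : (1000 : ℝ) ≤ n :=
  h.le_log.trans (Real.log_le_self n.cast_nonneg)

lemma le_d (h : AsymptoticRegime n p d ε j) : (1000 : ℝ) ^ 8 ≤ d :=
  (pow_le_pow_left₀ (by norm_num) h.le_log 8).trans h.log_pow_le

lemma one_le_d (h : AsymptoticRegime n p d ε j) : 1 ≤ d := le_trans (by norm_num) h.le_d

lemma d_pos (h : AsymptoticRegime n p d ε j) : 0 < d := one_pos.trans_le h.one_le_d

lemma p_eq_div (h : AsymptoticRegime n p d ε j) : p = d / n :=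
  eq_div_of_mul_eq h.n_pos.ne' h.mul_eq

lemma p_pos (h : AsymptoticRegime n p d ε j) : 0 < p :=
  h.p_eq_div ▸ div_pos h.d_pos h.n_pos

lemma p_le_one (h : AsymptoticRegime n p d ε j) : p ≤ 1 := by
  linarith [h.p_le, h.ε_le_one]

lemma d_le_n (h : AsymptoticRegime n p d ε j) : d ≤ n :=
  h.mul_eq ▸ mul_le_of_le_one_left n.cast_nonneg h.p_le_one

lemma log_d_le_log_n (h : AsymptoticRegime n p d ε j) : Real.log d ≤ Real.log n :=
  Real.log_le_log h.d_pos h.d_le_n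

lemma le_log_d (h : AsymptoticRegime n p d ε j) : 16 ≤ Real.log d := by
  rw [Real.le_log_iff_exp_le h.d_pos]
  calc Real.exp 16 = Real.exp 1 ^ 16 := by rw [← Real.exp_nat_mul]; norm_num
    _ ≤ 3 ^ 16 := by gcongr; linarith [Real.exp_one_lt_d9]
    _ ≤ 1000 ^ 8 := by norm_num
    _ ≤ d := h.le_d

lemma mul_log_d_le (h : AsymptoticRegime n p d ε j) : 8 * Real.log d ≤ d := by
  have hexp := Real.quadratic_le_exp_of_nonneg (x := Real.log d) (by linarith [h.le_log_d])
  rw [Real.exp_log h.d_pos] at hexp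
  nlinarith [h.le_log_d]

lemma pow_div_pos (h : AsymptoticRegime n p d ε j) : 0 < d ^ (j + 1) / n :=
  div_pos (pow_pos h.d_pos _) h.n_pos

lemma pow_div_le_one_div (h : AsymptoticRegime n p d ε j) : d ^ (j + 1) / n ≤ 1 / 512 := by
  linarith [h.pow_div_le, h.ε_le_one]

lemma succ_le_log (h : AsymptoticRegime n p d ε j) : ((j + 1 : ℕ) : ℝ) ≤ Real.log n := by
  have hpow : d ^ (j + 1) ≤ n := (div_le_one h.n_pos).1 (by linarith [h.pow_div_le_one_div])
  have hlog := Real.log_le_log (pow_pos h.d_pos _) hpow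
  rw [Real.log_pow] at hlog
  nlinarith [h.le_log_d, (j + 1).cast_nonneg (α := ℝ)]

lemma slack_pos (h : AsymptoticRegime n p d ε j) : 0 < slack n := by
  have := h.le_log
  unfold slack
  positivity

lemma slack_le (h : AsymptoticRegime n p d ε j) : slack n ≤ 1 / 8 := by
  have hL : (2 : ℝ) ^ 3 ≤ Real.log n ^ 3 := by gcongr; linarith [h.le_log]
  exact one_div_le_one_div_of_le (by norm_num) (le_trans (by norm_num) hL)

lemma succ_mul_slack_le (h : AsymptoticRegime n p d ε j) :
    ((j + 1 : ℕ) : ℝ) * slack n ≤ 1 / Real.log n ^ 2 := by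
  have hL : Real.log n ≠ 0 := by linarith [h.le_log]
  calc ((j + 1 : ℕ) : ℝ) * slack n ≤ Real.log n * slack n := by
        gcongr
        exacts [h.slack_pos.le, h.succ_le_log]
    _ = 1 / Real.log n ^ 2 := by unfold slack; field_simp

lemma le_slack_sq_mul (h : AsymptoticRegime n p d ε j) :
    2 * Real.log n ≤ slack n ^ 2 * d / 4 := by
  have hL := h.le_log
  calc 2 * Real.log n ≤ Real.log n ^ 2 / 4 := by nlinarith
    _ = slack n ^ 2 * Real.log n ^ 8 / 4 := by unfold slack; field_simp
    _ ≤ slack n ^ 2 * d / 4 := by gcongr; exact h.log_pow_le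

lemma one_le_slack_mul (h : AsymptoticRegime n p d ε j) : 1 ≤ slack n * d := by
  nlinarith [h.le_slack_sq_mul, h.le_log, h.slack_le, h.slack_pos, h.d_pos,
    mul_pos h.slack_pos h.d_pos]

lemma le_one_sub_slack_pow (h : AsymptoticRegime n p d ε j) :
    1 - 2 / Real.log n ^ 2 ≤ (1 - 2 * slack n) ^ (j + 1) := by
  have hbern := one_add_mul_le_pow (a := -(2 * slack n)) (by linarith [h.slack_le]) (j + 1)
  rw [← sub_eq_add_neg] at hbern
  linarith [h.succ_mul_slack_le, div_eq_mul_one_div 2 (Real.log n ^ 2)]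

lemma one_add_slack_pow_le (h : AsymptoticRegime n p d ε j) :
    (1 + 2 * slack n) ^ (j + 1) ≤ 1 + ε / 32 := by
  set x := 2 * (((j + 1 : ℕ) : ℝ) * slack n)
  have hx0 : 0 ≤ x := by have := h.slack_pos; positivity
  have hx : x ≤ ε / 500 := by linarith [h.succ_mul_slack_le, h.one_div_log_sq_le]
  have hexp := Real.abs_exp_sub_one_sub_id_le (x := x)
    (by rw [abs_of_nonneg hx0]; linarith [h.ε_le_one])
  calc (1 + 2 * slack n) ^ (j + 1) ≤ Real.exp (2 * slack n) ^ (j + 1) := by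
        have := h.slack_pos
        gcongr
        linarith [Real.add_one_le_exp (2 * slack n)]
    _ = Real.exp x := by rw [← Real.exp_nat_mul]; congr 1; ring
    _ ≤ 1 + ε / 32 := by nlinarith [(abs_le.1 hexp).2, h.ε_le_one]

lemma le_one_sub_slack_pow_mul (h : AsymptoticRegime n p d ε j) :
    1 - ε / 32 ≤ (1 - 2 * slack n) ^ (j + 1) * (1 - 8 * (d ^ (j + 1) / n)) := by
  have hslack : 1 - ε / 64 ≤ (1 - 2 * slack n) ^ (j + 1) := by
    linarith [h.le_one_sub_slack_pow, h.one_div_log_sq_le, h.ε_pos,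
      div_eq_mul_one_div 2 (Real.log n ^ 2)]
  nlinarith [h.pow_div_le, h.ε_pos, h.ε_le_one]

lemma rpow_le_one_sub_pow (h : AsymptoticRegime n p d ε j) {a : ℕ}
    (ha : a ≤ (1 - ε / 2) * (n * Real.log d / d)) : d ^ (ε / 4) / d ≤ (1 - p) ^ a := by
  have hp := h.p_pos
  have hε := h.ε_pos
  have hp1 : 0 < 1 - p := by linarith [h.p_le, h.ε_le_one]
  have hlogd : 0 < Real.log d := by linarith [h.le_log_d]
  have hinv : (1 - p)⁻¹ ≤ 1 + p * (1 + ε / 4) := by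
    rw [inv_le_iff_one_le_mul₀ hp1]
    have hpε : p * (1 + ε / 4) ≤ ε / 4 := by nlinarith [h.p_le, h.ε_le_one]
    linarith [mul_nonneg hp.le (sub_nonneg.2 hpε)]
  have hlog : -(p * (1 + ε / 4)) ≤ Real.log (1 - p) := by
    linarith [Real.one_sub_inv_le_log_of_pos hp1]
  have hap : a * p ≤ (1 - ε / 2) * Real.log d := by
    calc a * p ≤ (1 - ε / 2) * (n * Real.log d / d) * p := by gcongr
      _ = (1 - ε / 2) * Real.log d := by
        rw [h.p_eq_div]; field_simp [h.n_pos.ne', h.d_pos.ne']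
  rw [← Real.rpow_sub_one h.d_pos.ne', Real.rpow_def_of_pos h.d_pos,
    ← Real.exp_log hp1, ← Real.exp_nat_mul,
    Real.exp_le_exp]
  calc Real.log d * (ε / 4 - 1) ≤ -((1 - ε / 2) * Real.log d * (1 + ε / 4)) := by
        nlinarith [mul_nonneg (sq_nonneg ε) hlogd.le]
    _ ≤ -(a * p * (1 + ε / 4)) := by gcongr
    _ = a * -(p * (1 + ε / 4)) := by ring
    _ ≤ a * Real.log (1 - p) := by gcongr

end AsymptoticRegime

/-! ### The localization number of typical graphs -/

/-- The number of possible positions that the robber maintains, about `log d / p`: all but an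
expected number `n / d` of the vertices have a neighbour in a given set of this size. -/
noncomputable def targetSize (n : ℕ) (d : ℝ) : ℕ := ⌈n * Real.log d / d⌉₊

lemma le_targetSize (n : ℕ) (d : ℝ) : n * Real.log d / d ≤ targetSize n d := Nat.le_ceil _

/-- The properties of `G(n,p)` with average degree `d` from which the localization number can be
determined up to a factor `1 ± ε`, where `j + 2` bounds the diameter. -/
structure IsTypical {n : ℕ} (G : SimpleGraph (Fin n)) (p d ε : ℝ) (j : ℕ) : Prop where
  isRegularExpander : IsRegularExpander G p (slack n)
  mem_gBall (u v : Fin n) : v ∈ gBall G {u} (j + 2)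
  hasUncoveredNeighbors :
    HasUncoveredNeighbors G ((1 - ε / 2) * (n * Real.log d / d)) (targetSize n d)

namespace AsymptoticRegime

variable {n j k : ℕ} {p d ε : ℝ} {G : SimpleGraph (Fin n)}

lemma p_mul_card (h : AsymptoticRegime n p d ε j) : p * Fintype.card (Fin n) = d := by
  simpa using h.mul_eq

lemma le_mul_log_div_pow (h : AsymptoticRegime n p d ε j) :
    512 ≤ ε * (n * Real.log d / d ^ (j + 1)) := by
  have hpow := (div_le_iff₀ h.n_pos).1 h.pow_div_le
  rw [← mul_div_assoc, le_div_iff₀ (pow_pos h.d_pos _)]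
  nlinarith [h.le_log_d, mul_pos h.ε_pos h.n_pos]

lemma log_div_pow_le (h : AsymptoticRegime n p d ε j) :
    n * Real.log d / d ^ (j + 1) ≤ n * Real.log d / d := by
  have := h.le_log_d
  have := h.d_pos
  gcongr
  exact le_self_pow₀ h.one_le_d j.succ_ne_zero

lemma log_div_le (h : AsymptoticRegime n p d ε j) : n * Real.log d / d ≤ n / 8 := by
  rw [div_le_div_iff₀ h.d_pos (by norm_num)]
  nlinarith [h.mul_log_d_le, h.n_pos]

lemma le_log_div (h : AsymptoticRegime n p d ε j) : 512 ≤ n * Real.log d / d := by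
  nlinarith [h.le_mul_log_div_pow, h.log_div_pow_le, h.ε_pos, h.ε_le_one]

lemma targetSize_le (h : AsymptoticRegime n p d ε j) :
    targetSize n d ≤ n * Real.log d / d + 1 :=
  (Nat.ceil_lt_add_one (by linarith [h.le_log_div])).le

lemma separating_pow_le (h : AsymptoticRegime n p d ε j)
    (hk : (1 + ε / 2) * (n * Real.log d / d ^ (j + 1)) ≤ k) :
    (1 - (2 - 6 * (ε / 32)) * (d ^ (j + 1) / n)) ^ k ≤ 1 / (d ^ 2 * (d ^ (ε / 4)) ^ 2) := by
  have hd := h.d_pos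
  have hn := h.n_pos
  have hε := h.ε_pos
  have hlogd : 0 < Real.log d := by linarith [h.le_log_d]
  have hpos := h.pow_div_pos
  have hε2 : 0 ≤ 2 - 6 * (ε / 32) := by linarith [h.ε_le_one]
  have hexponent : (2 + ε / 2) * Real.log d ≤
      k * ((2 - 6 * (ε / 32)) * (d ^ (j + 1) / n)) := by
    calc (2 + ε / 2) * Real.log d
        ≤ (1 + ε / 2) * (2 - 6 * (ε / 32)) * Real.log d := by
          gcongr; nlinarith [h.ε_le_one]
      _ = (1 + ε / 2) * (n * Real.log d / d ^ (j + 1)) *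
          ((2 - 6 * (ε / 32)) * (d ^ (j + 1) / n)) := by field_simp
      _ ≤ _ := by gcongr
  calc (1 - (2 - 6 * (ε / 32)) * (d ^ (j + 1) / n)) ^ k
      ≤ Real.exp (-(k * ((2 - 6 * (ε / 32)) * (d ^ (j + 1) / n)))) :=
        one_sub_pow_le_exp_neg (by nlinarith [h.pow_div_le_one_div]) k
    _ ≤ Real.exp (-((2 + ε / 2) * Real.log d)) := by gcongr
    _ = 1 / (d ^ 2 * (d ^ (ε / 4)) ^ 2) := by
        rw [Real.exp_neg, ← one_div, mul_comm, ← Real.rpow_def_of_pos hd,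
          ← Real.rpow_mul_natCast hd.le, ← Real.rpow_two, ← Real.rpow_add hd]
        norm_num
        ring_nf

lemma copsWin (h : AsymptoticRegime n p d ε j) (hG : IsTypical G p d ε j) (hkn : k ≤ n)
    (hk : (1 + ε / 2) * (n * Real.log d / d ^ (j + 1)) ≤ k) : CopsWin G k := by
  have hε := h.ε_pos
  have hδ := h.slack_pos
  have hd := h.d_pos
  have : Nonempty (Fin n) := ⟨0, Nat.cast_pos.1 h.n_pos⟩
  have hq : 0 ≤ 1 - (2 - 6 * (ε / 32)) * (d ^ (j + 1) / n) := by
    nlinarith [h.pow_div_le_one_div, h.pow_div_pos]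
  refine copsWin_of_forall_ncard_dist_eq_le (q := 1 - (2 - 6 * (ε / 32)) * (d ^ (j + 1) / n))
    (Δ := (1 + 2 * slack n) * d) (by simpa using hkn) hq (fun u v huv ↦ ?_) (fun X ↦ ?_) ?_
  · simpa using hG.isRegularExpander.ncard_dist_eq_le (j := j + 1) (η := ε / 32)
      (connected_of_forall_mem_gBall hG.mem_gBall) h.p_mul_card h.p_pos.le h.one_le_d hδ.le
      (by linarith [h.slack_le]) h.one_le_slack_mul (by linarith [h.ε_le_one])
      (by rw [Fintype.card_fin]; linarith [h.pow_div_le_one_div]) h.one_add_slack_pow_le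
      (by simpa using h.le_one_sub_slack_pow_mul) huv
  · simpa [ballFinset_zero] using
      hG.isRegularExpander.card_ballFinset_succ_le (A := X) (j := 0) h.p_mul_card
        h.one_le_slack_mul
  · have hdε : 4 ≤ d ^ (ε / 4) := by nlinarith [h.log_sq_le_rpow, h.le_log]
    calc ((1 + 2 * slack n) * d) ^ 2 * (1 - (2 - 6 * (ε / 32)) * (d ^ (j + 1) / n)) ^ k
        ≤ (2 * d) ^ 2 * (1 / (d ^ 2 * (d ^ (ε / 4)) ^ 2)) := by
          gcongr
          · linarith [h.slack_le]
          · exact h.separating_pow_le hk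
      _ = 4 / (d ^ (ε / 4)) ^ 2 := by field_simp; norm_num
      _ ≤ 4 / 4 ^ 2 := by gcongr
      _ = 1 / 4 := by norm_num

lemma not_copsWin (h : AsymptoticRegime n p d ε j) (hG : IsTypical G p d ε j)
    (hk : k ≤ (1 - ε) * (n * Real.log d / d ^ (j + 1))) : ¬ CopsWin G k := by
  have hε := h.ε_pos
  have hδ := h.slack_pos
  have hd := h.d_pos
  have hlog := h.le_log_div
  have hm : (2 : ℝ) * targetSize n d ≤ n := by
    linarith [h.targetSize_le, h.log_div_le, h.le_n]
  have hm1 : (1 : ℝ) ≤ targetSize n d := by linarith [le_targetSize n d]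
  refine not_copsWin_of_hasUncoveredNeighbors hG.isRegularExpander h.p_mul_card hd.le hδ.le
    h.one_le_slack_mul hG.mem_gBall hG.hasUncoveredNeighbors (by exact_mod_cast hm1)
    (by rw [Fintype.card_fin]; exact_mod_cast hm) (by nlinarith [le_targetSize n d]) ?_
  have hk0 := k.cast_nonneg.trans hk
  have hslack : (1 + 2 * slack n) ^ j ≤ 1 + ε / 32 :=
    (pow_le_pow_right₀ (by linarith) j.le_succ).trans h.one_add_slack_pow_le
  calc k * ((1 + 2 * slack n) ^ j * d ^ j)
      ≤ (1 - ε) * (n * Real.log d / d ^ (j + 1)) * ((1 + ε / 32) * d ^ j) := by gcongr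
    _ = (1 - ε) * (1 + ε / 32) * (n * Real.log d / d) := by field_simp; ring
    _ ≤ (1 - ε / 2) * (n * Real.log d / d) := by gcongr; nlinarith

lemma abs_localizationNumber_sub_one_le (h : AsymptoticRegime n p d ε j)
    (hG : IsTypical G p d ε j) :
    |(localizationNumber G : ℝ) * d ^ (j + 1) / (n * Real.log d) - 1| ≤ ε := by
  have hn := h.n_pos
  have hd := h.d_pos
  have hε := h.ε_pos
  have hε1 := h.ε_le_one
  have hlogd := h.le_log_d
  set K := n * Real.log d / d ^ (j + 1)
  have hKε : 512 ≤ ε * K := h.le_mul_log_div_pow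
  have hK : 0 < K := by positivity
  have hceil := Nat.ceil_lt_add_one (a := (1 + ε / 2) * K) (by positivity)
  have hwin : CopsWin G ⌈(1 + ε / 2) * K⌉₊ := by
    refine h.copsWin hG ?_ (Nat.le_ceil _)
    have : (⌈(1 + ε / 2) * K⌉₊ : ℝ) ≤ n := by
      nlinarith [h.log_div_pow_le, h.log_div_le, h.le_n]
    exact_mod_cast this
  have hupper : (localizationNumber G : ℝ) ≤ (1 + ε) * K := by
    have : (localizationNumber G : ℝ) ≤ ⌈(1 + ε / 2) * K⌉₊ := by exact_mod_cast Nat.sInf_le hwin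
    linarith
  have hlower : (1 - ε) * K ≤ localizationNumber G := by
    by_contra! hlt
    exact h.not_copsWin hG hlt.le (Nat.sInf_mem (s := {k | CopsWin G k}) ⟨_, hwin⟩)
  have hratio : (localizationNumber G : ℝ) * d ^ (j + 1) / (n * Real.log d) =
      localizationNumber G / K := by
    simp only [K]
    field_simp
  rw [hratio, abs_le, neg_le_sub_iff_le_add, tsub_le_iff_right, ← sub_le_iff_le_add,
    le_div_iff₀ hK, div_le_iff₀ hK]
  exact ⟨hlower, by linarith⟩

end AsymptoticRegime

/-! ### The random graph is typical -/

namespace AsymptoticRegime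

variable {n j : ℕ} {p d ε : ℝ}

lemma mul_exp_neg_slack_le (h : AsymptoticRegime n p d ε j) :
    n * Real.exp (-(slack n ^ 2 * d / 4)) ≤ Real.exp (-Real.log n) := by
  nth_rw 1 [← Real.exp_log h.n_pos]
  rw [← Real.exp_add, Real.exp_le_exp]
  linarith [h.le_slack_sq_mul]

lemma targetSize_le_mul_log (h : AsymptoticRegime n p d ε j) :
    targetSize n d ≤ 2 * (n / d) * Real.log n := by
  have hlog : n * Real.log d / d ≤ n / d * Real.log n := by
    rw [mul_div_right_comm]
    exact mul_le_mul_of_nonneg_left h.log_d_le_log_n (div_nonneg n.cast_nonneg h.d_pos.le)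
  linarith [h.targetSize_le, h.le_log_div]

lemma one_sub_pow_targetSize_le (h : AsymptoticRegime n p d ε j) :
    (1 - p) ^ targetSize n d ≤ 1 / 2 := by
  have hlog : Real.log d ≤ targetSize n d * p := by
    calc Real.log d = n * Real.log d / d * p := by
          rw [h.p_eq_div]; field_simp [h.n_pos.ne', h.d_pos.ne']
      _ ≤ targetSize n d * p := mul_le_mul_of_nonneg_right (le_targetSize n d) h.p_pos.le
  calc (1 - p) ^ targetSize n d ≤ Real.exp (-(targetSize n d * p)) :=
        one_sub_pow_le_exp_neg h.p_le_one _
    _ ≤ Real.exp (-Real.log d) := by gcongr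
    _ = 1 / d := by rw [Real.exp_neg, Real.exp_log h.d_pos, one_div]
    _ ≤ 1 / 2 := one_div_le_one_div_of_le (by norm_num) (by linarith [h.le_d])

lemma le_mul_one_sub_pow_sub (h : AsymptoticRegime n p d ε j) {a : ℕ}
    (ha : a ≤ (1 - ε / 2) * (n * Real.log d / d)) :
    n / 4 * (d ^ (ε / 4) / d) ≤
      (n - (a + targetSize n d)) * ((1 - p) ^ a - (1 - p) ^ (a + targetSize n d)) := by
  have hd := h.d_pos
  have hhalf : (n : ℝ) / 2 ≤ n - (a + targetSize n d) := by
    nlinarith [h.targetSize_le, h.log_div_le, h.le_n, h.le_log_div, h.ε_pos]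
  calc n / 4 * (d ^ (ε / 4) / d) = n / 2 * (d ^ (ε / 4) / d * (1 - 1 / 2)) := by ring
    _ ≤ (n - (a + targetSize n d)) * ((1 - p) ^ a * (1 - (1 - p) ^ targetSize n d)) := by
      have := h.p_le_one
      gcongr
      exacts [by linarith [h.n_pos], h.rpow_le_one_sub_pow ha, h.one_sub_pow_targetSize_le]
    _ = _ := by rw [pow_add]; ring

lemma mul_log_sq_le (h : AsymptoticRegime n p d ε j) :
    80 * (n / d * Real.log n ^ 2) ≤ n / 4 * (d ^ (ε / 4) / d) := by
  have hnd : 0 ≤ n / d := div_nonneg n.cast_nonneg h.d_pos.le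
  calc 80 * (n / d * Real.log n ^ 2) = n / d / 4 * (320 * Real.log n ^ 2) := by ring
    _ ≤ n / d / 4 * d ^ (ε / 4) := by gcongr; exact h.log_sq_le_rpow
    _ = _ := by ring

lemma log_le_mul_log_sq (h : AsymptoticRegime n p d ε j) :
    Real.log n ≤ n / d * Real.log n ^ 2 := by
  have hnd : 1 ≤ n / d := (one_le_div h.d_pos).2 h.d_le_n
  nlinarith [h.le_log]

lemma exp_mul_pow_targetSize_le (h : AsymptoticRegime n p d ε j) :
    (Real.exp 1 * (n : ℝ) ^ targetSize n d) ^ 2 *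
      Real.exp (-(n / 4 * (d ^ (ε / 4) / d) / 8)) ≤ Real.exp (2 - Real.log n) := by
  have hpow : (Real.exp 1 * (n : ℝ) ^ targetSize n d) ^ 2 =
      Real.exp ((2 : ℕ) * (1 + targetSize n d * Real.log n)) := by
    rw [Real.exp_nat_mul, Real.exp_add, Real.exp_nat_mul _ (targetSize n d),
      Real.exp_log h.n_pos]
  have hm : targetSize n d * Real.log n ≤ 2 * (n / d * Real.log n ^ 2) := by
    calc targetSize n d * Real.log n ≤ 2 * (n / d) * Real.log n * Real.log n :=
          mul_le_mul_of_nonneg_right h.targetSize_le_mul_log (by linarith [h.le_log])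
      _ = _ := by ring
  rw [hpow, ← Real.exp_add, Real.exp_le_exp, Nat.cast_two]
  linarith [h.le_log, h.mul_log_sq_le, h.log_le_mul_log_sq]

lemma two_div_log_sq_add_le (h : AsymptoticRegime n p d ε j) :
    2 / Real.log n ^ 2 + 8 * (d ^ (j + 1) / n) ≤ 1 / 4 := by
  linarith [h.one_div_log_sq_le, h.pow_div_le, h.ε_le_one,
    div_eq_mul_one_div 2 (Real.log n ^ 2)]

lemma two_div_log_sq_add_mul_le (h : AsymptoticRegime n p d ε j)
    (hc : d ^ (j + 2) / n ≤ 3 * Real.log n) :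
    (2 / Real.log n ^ 2 + 8 * (d ^ (j + 1) / n)) * (d ^ (j + 2) / n) ≤ 1 := by
  have hd := h.d_pos
  have hn := h.n_pos
  have hL := h.le_log
  set c := d ^ (j + 2) / n
  have hlog : 2 / Real.log n ^ 2 * c ≤ 1 / 2 := by
    rw [div_mul_eq_mul_div, div_le_iff₀ (by positivity)]
    nlinarith
  have hsq : 16 * c ^ 2 ≤ d := by
    calc 16 * c ^ 2 ≤ 16 * (3 * Real.log n) ^ 2 := by gcongr
      _ ≤ 1000 ^ 6 * Real.log n ^ 2 := by nlinarith
      _ ≤ Real.log n ^ 6 * Real.log n ^ 2 := by gcongr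
      _ = Real.log n ^ 8 := by ring
      _ ≤ d := h.log_pow_le
  have hpow : 8 * (d ^ (j + 1) / n) * c ≤ 1 / 2 := by
    calc 8 * (d ^ (j + 1) / n) * c = 8 * c ^ 2 / d := by simp only [c]; field_simp; ring
      _ ≤ 1 / 2 := by rw [div_le_iff₀ hd]; linarith
  linarith

lemma one_sub_mul_pow_div_le (h : AsymptoticRegime n p d ε j) :
    (1 - (2 / Real.log n ^ 2 + 8 * (d ^ (j + 1) / n))) * (d ^ (j + 2) / n) ≤
      p * ((1 - 2 * slack n) ^ (j + 1) * (1 - 8 * (d ^ (j + 1) / n)) * d ^ (j + 1)) := by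
  have hn := h.n_pos
  have hL := h.le_log
  have hc : 0 ≤ d ^ (j + 2) / n := div_nonneg (pow_nonneg h.d_pos.le _) hn.le
  calc (1 - (2 / Real.log n ^ 2 + 8 * (d ^ (j + 1) / n))) * (d ^ (j + 2) / n)
      ≤ (1 - 2 * slack n) ^ (j + 1) * (1 - 8 * (d ^ (j + 1) / n)) * (d ^ (j + 2) / n) := by
        gcongr
        nlinarith [h.le_one_sub_slack_pow, h.pow_div_le_one_div, h.pow_div_pos,
          show 0 ≤ 2 / Real.log n ^ 2 by positivity]
    _ = _ := by rw [h.p_eq_div]; field_simp; ring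

lemma sq_mul_exp_neg_le (h : AsymptoticRegime n p d ε j) :
    (n : ℝ) ^ 2 * Real.exp
        (-(p * ((1 - 2 * slack n) ^ (j + 1) * (1 - 8 * (d ^ (j + 1) / n)) * d ^ (j + 1)))) ≤
      Real.exp (1 - (d ^ (j + 2) / n - 2 * Real.log n)) + Real.exp (-(Real.log n / 4)) := by
  have hsq : (n : ℝ) ^ 2 = Real.exp ((2 : ℕ) * Real.log n) := by
    rw [Real.exp_nat_mul, Real.exp_log h.n_pos]
  have hexponent := h.one_sub_mul_pow_div_le
  rw [hsq, ← Real.exp_add, Nat.cast_two]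
  -- The relative errors cost `O(1)` if `d ^ (j + 2) / n = O(log n)`, else there is room to spare.
  rcases le_total (d ^ (j + 2) / n) (3 * Real.log n) with hsmall | hlarge
  · refine le_add_of_le_of_nonneg (Real.exp_le_exp.2 ?_) (Real.exp_nonneg _)
    linarith [h.two_div_log_sq_add_mul_le hsmall]
  · refine le_add_of_nonneg_of_le (Real.exp_nonneg _) (Real.exp_le_exp.2 ?_)
    nlinarith [h.two_div_log_sq_add_le, h.le_log]

end AsymptoticRegime

section Typical

open MeasureTheory unitInterval

/-- Bounds the probability that `G(n,p)` is not typical, where `L = log n` and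
`c = d ^ (i + 1) / n`. The terms account in turn for the expansion, the uncovered neighbours
and the diameter. -/
noncomputable def failureBound (L c : ℝ) : ℝ :=
  2 * (Real.exp (Real.exp (-L)) - 1) + Real.exp (2 - L) +
    (Real.exp (1 - (c - 2 * L)) + Real.exp (-(L / 4)))

namespace AsymptoticRegime

variable {n j : ℕ} {p : I} {d ε : ℝ}

lemma binomialRandom_real_not_isRegularExpander_slack_le (h : AsymptoticRegime n p d ε j) :
    G(Fin n, p).real {G | ¬ IsRegularExpander G p (slack n)} ≤
      2 * (Real.exp (Real.exp (-Real.log n)) - 1) := by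
  refine (binomialRandom_real_not_isRegularExpander_le (by rw [h.p_mul_card]; exact h.one_le_d)
    h.slack_pos.le (by linarith [h.slack_le])).trans ?_
  rw [h.p_mul_card, Fintype.card_fin]
  gcongr
  exact h.mul_exp_neg_slack_le

lemma binomialRandom_real_not_hasUncoveredNeighbors_targetSize_le
    (h : AsymptoticRegime n p d ε j) :
    G(Fin n, p).real {G | ¬ HasUncoveredNeighbors G
        ((1 - ε / 2) * (n * Real.log d / d)) (targetSize n d)} ≤ Real.exp (2 - Real.log n) := by
  have : Nonempty (Fin n) := ⟨0, Nat.cast_pos.1 h.n_pos⟩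
  refine (binomialRandom_real_not_hasUncoveredNeighbors_le (μ := n / 4 * (d ^ (ε / 4) / d))
    ?_ ?_ fun a ha ↦ ?_).trans ?_
  · nlinarith [le_targetSize n d, h.le_log_div, h.ε_pos]
  · nlinarith [h.targetSize_le_mul_log, h.mul_log_sq_le, h.log_le_mul_log_sq, h.le_log]
  · simpa using h.le_mul_one_sub_pow_sub ha
  · simpa using h.exp_mul_pow_targetSize_le

lemma binomialRandom_real_isRegularExpander_and_exists_notMem_gBall_le
    (h : AsymptoticRegime n p d ε j) :
    G(Fin n, p).real {G | IsRegularExpander G p (slack n) ∧ ∃ u v, v ∉ gBall G {u} (j + 2)} ≤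
      Real.exp (1 - (d ^ (j + 2) / n - 2 * Real.log n)) + Real.exp (-(Real.log n / 4)) := by
  refine (measureReal_mono ?_).trans ((binomialRandom_real_exists_notMem_gBall_succ_le (j + 1)
    ((1 - 2 * slack n) ^ (j + 1) * (1 - 8 * (d ^ (j + 1) / n)) * d ^ (j + 1))).trans ?_)
  · refine fun G hG ↦ ⟨fun u ↦ ?_, hG.2⟩
    simpa using hG.1.le_card_ballFinset (A := {u}) (j := j + 1) h.p_mul_card h.p_pos.le h.one_le_d
      h.slack_pos.le (by linarith [h.slack_le]) h.one_le_slack_mul (by simp)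
      (by linarith [h.one_add_slack_pow_le, h.ε_le_one])
      (by rw [Fintype.card_fin]; linarith [h.pow_div_le_one_div])
  · simpa only [Fintype.card_fin] using h.sq_mul_exp_neg_le

lemma binomialRandom_real_not_isTypical_le (h : AsymptoticRegime n p d ε j) :
    G(Fin n, p).real {G | ¬ IsTypical G p d ε j} ≤
      failureBound (Real.log n) (d ^ (j + 2) / n) := by
  refine (measureReal_mono fun G hG ↦ ?_).trans <|
    (measureReal_union_le _ _).trans <| add_le_add ((measureReal_union_le _ _).trans <|
      add_le_add h.binomialRandom_real_not_isRegularExpander_slack_le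
        h.binomialRandom_real_not_hasUncoveredNeighbors_targetSize_le)
      h.binomialRandom_real_isRegularExpander_and_exists_notMem_gBall_le
  by_contra hgood
  simp only [mem_union, mem_ofPred_eq, not_or, not_not, not_and, not_exists] at hgood
  exact hG ⟨hgood.1.1, hgood.2 hgood.1.1, hgood.1.2⟩

lemma one_sub_failureBound_le_gnpProb (h : AsymptoticRegime n p d ε j) :
    1 - failureBound (Real.log n) (d ^ (j + 2) / n) ≤ gnpProb n p
      {G | |(localizationNumber G : ℝ) * d ^ (j + 1) / (n * Real.log d) - 1| ≤ ε} := by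
  calc 1 - failureBound (Real.log n) (d ^ (j + 2) / n)
      ≤ 1 - G(Fin n, p).real {G | ¬ IsTypical G p d ε j} :=
        sub_le_sub_left h.binomialRandom_real_not_isTypical_le 1
    _ = G(Fin n, p).real {G | IsTypical G p d ε j} := by
        rw [← probReal_compl_eq_one_sub (.of_discrete), compl_ofPred]
        simp only [not_not]
    _ ≤ G(Fin n, p).real _ :=
        measureReal_mono fun G hG ↦ h.abs_localizationNumber_sub_one_le hG
    _ = _ := (gnpProb_eq_binomialRandom_real _).symm

end AsymptoticRegime
end Typical

/-! ### Asymptotics -/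

lemma exists_tendsto_atTop_tendsto_diagonal {X : Type*} [PseudoMetricSpace X] {f : ℕ → ℕ → X}
    {a : X} (hf : ∀ k, Tendsto (f k) atTop (𝓝 a)) :
    ∃ k : ℕ → ℕ, Tendsto k atTop atTop ∧ Tendsto (fun n ↦ f (k n) n) atTop (𝓝 a) := by
  classical
  let close (n k : ℕ) : Prop := dist (f k n) a ≤ 1 / ((k : ℝ) + 1)
  have hclose (k : ℕ) : ∀ᶠ n in atTop, close n k :=
    (hf k).eventually (Metric.closedBall_mem_nhds a Nat.one_div_pos_of_nat)
  have hk : Tendsto (fun n ↦ Nat.findGreatest (close n) n) atTop atTop := by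
    refine tendsto_atTop.2 fun K ↦ ?_
    filter_upwards [hclose K, eventually_ge_atTop K] with n hn hK
    exact Nat.le_findGreatest hK hn
  refine ⟨_, hk, tendsto_iff_dist_tendsto_zero.2 (squeeze_zero' (.of_forall fun _ ↦ dist_nonneg) ?_
    (tendsto_one_div_add_atTop_nhds_zero_nat.comp hk))⟩
  filter_upwards [hclose 0] with n hn
  exact Nat.findGreatest_spec (Nat.zero_le n) hn

lemma tendsto_log_natCast : Tendsto (fun n : ℕ ↦ Real.log n) atTop atTop :=
  Real.tendsto_log_atTop.comp tendsto_natCast_atTop_atTop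

lemma tendsto_failureBound {α : Type*} {l : Filter α} {L c : α → ℝ} (hL : Tendsto L l atTop)
    (hc : Tendsto (fun x ↦ c x - 2 * L x) l atTop) :
    Tendsto (fun x ↦ failureBound (L x) (c x)) l (𝓝 0) := by
  have hexp {u : α → ℝ} (hu : Tendsto u l atTop) : Tendsto (fun x ↦ Real.exp (-u x)) l (𝓝 0) :=
    Real.tendsto_exp_neg_atTop_nhds_zero.comp hu
  have hexp_sub (b : ℝ) {u : α → ℝ} (hu : Tendsto u l atTop) :
      Tendsto (fun x ↦ Real.exp (b - u x)) l (𝓝 0) := by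
    simpa [sub_eq_add_neg, Real.exp_add] using (hexp hu).const_mul (Real.exp b)
  have hexpansion := (((Real.continuous_exp.tendsto 0).comp (hexp hL)).sub_const 1).const_mul 2
  simpa [failureBound] using (hexpansion.add (hexp_sub 2 hL)).add
    ((hexp_sub 1 hc).add (hexp (hL.atTop_div_const (by norm_num : (0 : ℝ) < 4))))

section Regime

variable {p d ω : ℕ → ℝ} {i : ℕ → ℕ} {ε : ℝ}

lemma eventually_log_rpow_le (hω : Tendsto ω atTop atTop)
    (hdω : ∀ᶠ n : ℕ in atTop, Real.log n ^ ω n ≤ d n) (C : ℝ) :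
    ∀ᶠ n : ℕ in atTop, Real.log n ^ C ≤ d n := by
  filter_upwards [hdω, hω.eventually_ge_atTop C, tendsto_log_natCast.eventually_ge_atTop 1]
    with n hn hC hlog
  exact (Real.rpow_le_rpow_of_exponent_le hlog hC).trans hn

lemma mul_log_sq_le_rpow {L x : ℝ} (hL : 320 ≤ L) (hε : 0 < ε) (hx : L ^ (12 / ε) ≤ x) :
    320 * L ^ 2 ≤ x ^ (ε / 4) := by
  have hL0 : 0 ≤ L := by linarith
  calc 320 * L ^ 2 ≤ L * L ^ 2 := by gcongr
    _ = (L ^ (12 / ε)) ^ (ε / 4) := by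
      rw [← Real.rpow_mul hL0, show 12 / ε * (ε / 4) = (3 : ℕ) by field_simp; norm_num,
        Real.rpow_natCast]
      ring
    _ ≤ x ^ (ε / 4) := by gcongr

lemma eventually_asymptoticRegime (hd : ∀ n, d n = p n * n)
    (hdn : Tendsto (fun n : ℕ ↦ d n / n) atTop (𝓝 0)) (hω : Tendsto ω atTop atTop)
    (hdω : ∀ᶠ n : ℕ in atTop, Real.log n ^ ω n ≤ d n)
    (hdi : Tendsto (fun n : ℕ ↦ d n ^ i n / n) atTop (𝓝 0))
    (hdi1 : Tendsto (fun n : ℕ ↦ d n ^ (i n + 1) / n - 2 * Real.log n) atTop atTop)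
    (hε : 0 < ε) (hε1 : ε ≤ 1) :
    ∀ᶠ n : ℕ in atTop, ∃ j, i n = j + 1 ∧ AsymptoticRegime n (p n) (d n) ε j := by
  have hlog := tendsto_log_natCast
  filter_upwards [eventually_log_rpow_le hω hdω 8, eventually_log_rpow_le hω hdω (12 / ε),
    eventually_gt_atTop 0, hlog.eventually_ge_atTop 320, hlog.eventually_ge_atTop (1000 / ε),
    hdn.eventually (gt_mem_nhds (show 0 < ε / 8 by positivity)),
    hdi.eventually (gt_mem_nhds (show 0 < ε / 512 by positivity)),
    hdi1.eventually_ge_atTop 1] with n hlog8 hlogε hn hL hLε hp hpow hsub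
  have hi : i n ≠ 0 := fun hi ↦ by
    rw [hi, zero_add, pow_one] at hsub
    linarith
  obtain ⟨j, hj⟩ : ∃ j, i n = j + 1 := Nat.exists_eq_succ_of_ne_zero hi
  have hpn : p n = d n / n := eq_div_of_mul_eq (by positivity) (hd n).symm
  exact ⟨j, hj,
    { mul_eq := (hd n).symm
      p_le := hpn ▸ hp.le
      ε_pos := hε
      ε_le_one := hε1
      le_mul_log := (div_le_iff₀' hε).1 hLε
      log_pow_le := by exact_mod_cast hlog8
      pow_div_le := hj ▸ hpow.le
      log_sq_le_rpow := mul_log_sq_le_rpow hL hε hlogε }⟩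

lemma aas_abs_localizationNumber_sub_one_le (hd : ∀ n, d n = p n * n)
    (hdn : Tendsto (fun n : ℕ ↦ d n / n) atTop (𝓝 0)) (hω : Tendsto ω atTop atTop)
    (hdω : ∀ᶠ n : ℕ in atTop, Real.log n ^ ω n ≤ d n)
    (hdi : Tendsto (fun n : ℕ ↦ d n ^ i n / n) atTop (𝓝 0))
    (hdi1 : Tendsto (fun n : ℕ ↦ d n ^ (i n + 1) / n - 2 * Real.log n) atTop atTop)
    (hε : 0 < ε) (hε1 : ε ≤ 1) :
    AAS p fun n ↦
      {G | |(localizationNumber G : ℝ) * d n ^ i n / (n * Real.log (d n)) - 1| ≤ ε} := by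
  have hbound : Tendsto (fun n : ℕ ↦ 1 - failureBound (Real.log n) (d n ^ (i n + 1) / n))
      atTop (𝓝 1) := by
    simpa using (tendsto_failureBound tendsto_log_natCast hdi1).const_sub 1
  have hregime := eventually_asymptoticRegime hd hdn hω hdω hdi hdi1 hε hε1
  refine tendsto_of_tendsto_of_tendsto_of_le_of_le' hbound tendsto_const_nhds ?_ ?_
  · filter_upwards [hregime] with n ⟨j, hj, h⟩
    rw [hj]
    exact h.one_sub_failureBound_le_gnpProb (p := ⟨p n, h.p_pos.le, h.p_le_one⟩)
  · filter_upwards [hregime] with n ⟨j, _, h⟩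
    rw [gnpProb_eq_binomialRandom_real (p := ⟨p n, h.p_pos.le, h.p_le_one⟩)]
    exact MeasureTheory.measureReal_le_one

end Regime

end LocalizationGame

theorem stmt1_localization_gnp_asymptotics
    (p d : ℕ → ℝ) (i : ℕ → ℕ) (ω : ℕ → ℝ)
    (hd : ∀ n, d n = p n * n)
    (hlogd : Filter.Tendsto (fun n : ℕ => Real.log n / d n) Filter.atTop (nhds 0))
    (hdn : Filter.Tendsto (fun n : ℕ => d n / n) Filter.atTop (nhds 0))
    (hω : Filter.Tendsto ω Filter.atTop Filter.atTop)
    (hdω : ∀ᶠ n : ℕ in Filter.atTop, (Real.log n) ^ ω n ≤ d n)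
    (hdi : Filter.Tendsto (fun n : ℕ => d n ^ i n / n) Filter.atTop (nhds 0))
    (hdi1 : Filter.Tendsto (fun n : ℕ => d n ^ (i n + 1) / n - 2 * Real.log n)
      Filter.atTop Filter.atTop) :
    ∃ ε : ℕ → ℝ, Filter.Tendsto ε Filter.atTop (nhds 0) ∧
      AAS p (fun n : ℕ =>
        {G : SimpleGraph (Fin n) |
          |(localizationNumber G : ℝ) * d n ^ i n / (n * Real.log (d n)) - 1| ≤ ε n}) := by
  have hfixed (k : ℕ) := LocalizationGame.aas_abs_localizationNumber_sub_one_le hd hdn hω hdω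
    hdi hdi1 (ε := 1 / ((k : ℝ) + 1)) Nat.one_div_pos_of_nat
    ((div_le_one (by positivity)).2 (by simp))
  obtain ⟨k, hk, hdiag⟩ := LocalizationGame.exists_tendsto_atTop_tendsto_diagonal hfixed
  exact ⟨fun n ↦ 1 / ((k n : ℝ) + 1), tendsto_one_div_add_atTop_nhds_zero_nat.comp hk, hdiag⟩
end

section
/- Let ω = ω(n) → ∞ with ω ≤ (log n)^4·(log log n)^2, and suppose d = d(n) := p(n)·n satisfies ω·log n ≤ d = o(n). Let i = i(n) ∈ ℕ be such that d^i = o(n). Then there is an absolute constant C such that asymptotically almost surely, for G = (V,E) ∈ G(n,p): for every V' ⊆ V with |V'| ≤ 2, the quantity |S(V', i)| differs from d^i·|V'| by at most C·(1/√ω + d^i/n)·d^i·|V'|. In particular, a.a.s. for every two distinct vertices x, y ∈ V, |S(x,i) \ S(y,i)| = (1 + O(1/√ω) + O(d^i/n))·d^i. -/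
open Filter SimpleGraph Set
open scoped Topology

/-!
Breadth-first search from a fixed nonempty set `W` of at most `k` vertices never tests the same pair
twice. Hence, once the vertices within distance `j` of `W` are known, the size of the next layer is
a sum of independent indicators, with mean about `d` times the size of the current layer. By
Chernoff's bound each step has relative error at most `ε j ≈ √(log n / d ^ (j + 1))` with failure
probability small enough for a union bound over all `W` and all steps. Since `ω * log n ≤ d`, the
errors `ε j` sum geometrically to `O(1 / √ω)`; vertices already found and vertices hit twice cost
another `O(d ^ i / n)`.

The layer of `W` is contained in the union of the spheres around the vertices of `W`, whose size is
at most the sum of the sizes of these spheres. The layer estimates for `W` and for single vertices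
therefore determine the size of the union, and that of a difference of two spheres.
-/

open MeasureTheory ProbabilityTheory unitInterval
open scoped Finset

section EdgeIndependence

variable {V : Type*}

/-- The event `A` is determined by which of the pairs in `F` are edges. -/
def EdgeLocal (F : Set (Sym2 V)) (A : Set (SimpleGraph V)) : Prop :=
  ∀ ⦃G H : SimpleGraph V⦄, (∀ e ∈ F, e ∈ G.edgeSet ↔ e ∈ H.edgeSet) → (G ∈ A ↔ H ∈ A)

theorem EdgeLocal.preimage_image_restrict {F : Set (Sym2 V)} {A : Set (SimpleGraph V)}
    (hA : EdgeLocal F A) :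
    (fun G (e : F) ↦ (e : Sym2 V) ∈ G.edgeSet) ⁻¹'
      ((fun G (e : F) ↦ (e : Sym2 V) ∈ G.edgeSet) '' A) = A := by
  refine subset_antisymm ?_ (subset_preimage_image _ _)
  rintro G ⟨H, hH, hHG⟩
  exact (hA fun e he ↦ iff_of_eq (congrFun hHG ⟨e, he⟩)).1 hH

theorem EdgeLocal.biInter {ι : Type*} {S : Finset ι} {F : ι → Set (Sym2 V)}
    {A : ι → Set (SimpleGraph V)} (hA : ∀ i ∈ S, EdgeLocal (F i) (A i)) :
    EdgeLocal (⋃ i ∈ S, F i) (⋂ i ∈ S, A i) := by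
  intro G H hGH
  simp only [mem_iInter]
  exact forall₂_congr fun i hi ↦ hA i hi fun e he ↦ hGH e (mem_biUnion hi he)

variable [Finite V] {p : I}

instance : DiscreteMeasurableSpace (SimpleGraph V) where
  forall_measurableSet A := by
    rw [← preimage_image_eq A edgeSet_injective]
    exact measurable_edgeSet (Set.toFinite _).measurableSet

theorem binomialRandom_eq_map_infinitePi :
    G(V, p) = (Measure.infinitePi fun e : Sym2 V ↦
      toNNReal p • .dirac (¬ e.IsDiag) + toNNReal (σ p) • .dirac False).map
        fun f ↦ fromEdgeSet {e | f e} := by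
  rw [binomialRandom_eq_map, setBernoulli_eq_map,
    Measure.map_map measurable_fromEdgeSet (by fun_prop)]
  rfl

theorem iIndepFun_mem_edgeSet :
    iIndepFun (fun (e : Sym2 V) (G : SimpleGraph V) ↦ e ∈ G.edgeSet) G(V, p) := by
  have coordinates := iIndepFun_infinitePi (X := fun (e : Sym2 V) b ↦ b ∧ ¬ e.IsDiag)
    (P := fun e ↦ toNNReal p • .dirac (¬ e.IsDiag) + toNNReal (σ p) • .dirac False)
    fun _ ↦ .of_discrete
  rw [binomialRandom_eq_map_infinitePi, iIndepFun_iff_measure_inter_preimage_eq_mul]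
  intro S sets _
  simpa only [Measure.map_apply (f := fun f : Sym2 V → Prop ↦ fromEdgeSet {e | f e}) (by fun_prop)
    .of_discrete, preimage_iInter, ← preimage_comp, Function.comp_def, edgeSet_fromEdgeSet] using!
    coordinates.measure_inter_preimage_eq_mul S (sets := sets) fun _ _ ↦ .of_discrete

theorem EdgeLocal.indepSet {F F' : Set (Sym2 V)} {A B : Set (SimpleGraph V)}
    (hA : EdgeLocal F A) (hB : EdgeLocal F' B) (hF : Disjoint F F') : IndepSet A B G(V, p) := by
  classical
  have := Fintype.ofFinite F
  have := Fintype.ofFinite F'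
  have restrictions := iIndepFun_mem_edgeSet (p := p) |>.indepFun_finset F.toFinset F'.toFinset
    (by simpa using hF) fun _ ↦ .of_discrete
  rw [← F.coe_toFinset] at hA
  rw [← F'.coe_toFinset] at hB
  rw [← hA.preimage_image_restrict, ← hB.preimage_image_restrict]
  refine (indepSet_iff_measure_inter_eq_mul .of_discrete .of_discrete _).2 ?_
  exact restrictions.measure_inter_preimage_eq_mul _ _ .of_discrete .of_discrete

theorem EdgeLocal.iIndepSet {ι : Type*} {F : ι → Set (Sym2 V)} {A : ι → Set (SimpleGraph V)}
    (hA : ∀ i, EdgeLocal (F i) (A i)) (hF : Pairwise fun i j ↦ Disjoint (F i) (F j)) :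
    iIndepSet A G(V, p) := by
  classical
  rw [iIndepSet_iff_meas_biInter fun _ ↦ .of_discrete]
  intro S
  induction S using Finset.induction_on with
  | empty => simp
  | insert i S hi ih =>
    have hdisj : Disjoint (F i) (⋃ j ∈ S, F j) :=
      disjoint_iUnion₂_right.2 fun j hj ↦ hF (ne_of_mem_of_not_mem hj hi).symm
    rw [Finset.set_biInter_insert, Finset.prod_insert hi, ← ih]
    exact ((hA i).indepSet (.biInter fun j _ ↦ hA j) hdisj).measure_inter_eq_mul

theorem binomialRandom_real_adj {u v : V} (huv : u ≠ v) :
    G(V, p).real {G | G.Adj u v} = p := by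
  rw [binomialRandom_eq_map_infinitePi, measureReal_def,
    Measure.map_apply (by fun_prop) .of_discrete]
  have : (fun f : Sym2 V → Prop ↦ fromEdgeSet {e | f e}) ⁻¹' {G | G.Adj u v} =
    (fun f ↦ f s(u, v)) ⁻¹' {True} := by ext f; simp [huv]
  rw [this, ← Measure.map_apply (by fun_prop) .of_discrete, Measure.infinitePi_map_eval]
  simp [huv]

end EdgeIndependence

section Probability

variable {Ω : Type*} {mΩ : MeasurableSpace Ω} {μ : Measure Ω} [IsProbabilityMeasure μ]

theorem measureReal_mem_state_le {α : Type*} [Finite α] {state : Ω → α} {B : α → Set Ω} {c : ℝ}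
    (hstate : ∀ a, MeasurableSet (state ⁻¹' {a}))
    (hindep : ∀ ω, IndepSet (state ⁻¹' {state ω}) (B (state ω)) μ)
    (hB : ∀ ω, μ.real (B (state ω)) ≤ c) : μ.real {ω | ω ∈ B (state ω)} ≤ c := by
  have := Fintype.ofFinite α
  have slice_le (a : α) : μ.real (state ⁻¹' {a} ∩ B a) ≤ μ.real (state ⁻¹' {a}) * c := by
    rcases (state ⁻¹' {a}).eq_empty_or_nonempty with hempty | ⟨ω, rfl⟩
    · simp [hempty]
    · rw [measureReal_def, (hindep ω).measure_inter_eq_mul, ENNReal.toReal_mul]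
      exact mul_le_mul_of_nonneg_left (hB ω) measureReal_nonneg
  calc μ.real {ω | ω ∈ B (state ω)}
      = μ.real (⋃ a, state ⁻¹' {a} ∩ B a) := by congr 1; ext; simp
    _ ≤ ∑ a, μ.real (state ⁻¹' {a} ∩ B a) := measureReal_iUnion_fintype_le _
    _ ≤ ∑ a, μ.real (state ⁻¹' {a}) * c := Finset.sum_le_sum fun a _ ↦ slice_le a
    _ = c := by
      rw [← Finset.sum_mul, sum_measureReal_preimage_singleton _ fun a _ ↦ hstate a]
      simp

theorem mgf_indicator_one_le {A : Set Ω} (hA : MeasurableSet A) {t : ℝ} (ht : |t| ≤ 1) :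
    mgf (A.indicator fun _ ↦ 1) μ t ≤ Real.exp (μ.real A * (t + t ^ 2)) := by
  have exp_indicator (ω : Ω) : Real.exp (t * A.indicator (fun _ ↦ 1) ω)
      = 1 + A.indicator (fun _ ↦ Real.exp t - 1) ω := by
    by_cases h : ω ∈ A <;> simp [h]
  have exp_sub_one_le : Real.exp t - 1 ≤ t + t ^ 2 := by
    linarith [(abs_le.1 (Real.abs_exp_sub_one_sub_id_le ht)).2]
  calc mgf (A.indicator fun _ ↦ 1) μ t
      = 1 + μ.real A * (Real.exp t - 1) := by
        simp_rw [mgf, exp_indicator]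
        rw [integral_add (integrable_const _) ((integrable_const _).indicator hA),
          integral_indicator_const _ hA]
        simp
    _ ≤ 1 + μ.real A * (t + t ^ 2) := by gcongr
    _ ≤ Real.exp (μ.real A * (t + t ^ 2)) := by
        rw [add_comm]; exact Real.add_one_le_exp _

section Chernoff

variable {ι : Type*} [Fintype ι] {A : ι → Set Ω}

omit mΩ in
theorem natCast_ncard_mem_eq_sum_indicator :
    (fun ω ↦ ({i | ω ∈ A i}.ncard : ℝ)) = ∑ i, (A i).indicator fun _ ↦ (1 : ℝ) := by
  classical
  ext ω
  simp [indicator_apply, ncard_eq_toFinset_card']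

theorem mgf_ncard_mem_le (hA : ∀ i, MeasurableSet (A i)) (hindep : iIndepSet A μ)
    {t : ℝ} (ht : |t| ≤ 1) :
    mgf (fun ω ↦ ({i | ω ∈ A i}.ncard : ℝ)) μ t
      ≤ Real.exp ((∑ i, μ.real (A i)) * (t + t ^ 2)) := by
  rw [natCast_ncard_mem_eq_sum_indicator, hindep.iIndepFun_indicator.mgf_sum
    fun i ↦ measurable_const.indicator (hA i), Finset.sum_mul, Real.exp_sum]
  exact Finset.prod_le_prod (fun _ _ ↦ mgf_nonneg) fun i _ ↦ mgf_indicator_one_le (hA i) ht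

theorem integrable_exp_mul_ncard_mem {ι : Type*} [Finite ι] {A : ι → Set Ω}
    (hA : ∀ i, MeasurableSet (A i)) (t : ℝ) :
    Integrable (fun ω ↦ Real.exp (t * {i | ω ∈ A i}.ncard)) μ := by
  have := Fintype.ofFinite ι
  refine integrable_exp_mul_of_mem_Icc (a := 0) (b := Fintype.card ι) ?_ (.of_forall fun ω ↦ ?_)
  · rw [natCast_ncard_mem_eq_sum_indicator]
    have (i : ι) : Measurable ((A i).indicator fun _ ↦ (1 : ℝ)) := measurable_const.indicator (hA i)
    fun_prop
  · exact ⟨by positivity, mod_cast Nat.card_eq_fintype_card (α := ι) ▸ ncard_le_card _⟩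

theorem measureReal_lt_abs_ncard_sub_le (hA : ∀ i, MeasurableSet (A i)) (hindep : iIndepSet A μ)
    {m ε : ℝ} (hm : ∑ i, μ.real (A i) = m) (hε₀ : 0 ≤ ε) (hε₁ : ε ≤ 1) :
    μ.real {ω | ε * m < |({i | ω ∈ A i}.ncard : ℝ) - m|} ≤ 2 * Real.exp (-(ε ^ 2 * m / 4)) := by
  have upper : μ.real {ω | (1 + ε) * m ≤ ({i | ω ∈ A i}.ncard : ℝ)}
      ≤ Real.exp (-(ε ^ 2 * m / 4)) := by
    refine (measure_ge_le_exp_mul_mgf _ (t := ε / 2) (by positivity)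
      (integrable_exp_mul_ncard_mem hA _)).trans ?_
    grw [mgf_ncard_mem_le hA hindep (abs_le.2 ⟨by linarith, by linarith⟩), hm,
      ← Real.exp_add]
    exact Real.exp_le_exp.2 (by linarith)
  have lower : μ.real {ω | ({i | ω ∈ A i}.ncard : ℝ) ≤ (1 - ε) * m}
      ≤ Real.exp (-(ε ^ 2 * m / 4)) := by
    refine (measure_le_le_exp_mul_mgf _ (t := -(ε / 2)) (by linarith)
      (integrable_exp_mul_ncard_mem hA _)).trans ?_
    grw [mgf_ncard_mem_le hA hindep (abs_le.2 ⟨by linarith, by linarith⟩), hm,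
      ← Real.exp_add]
    exact Real.exp_le_exp.2 (by linarith)
  calc μ.real {ω | ε * m < |({i | ω ∈ A i}.ncard : ℝ) - m|}
      ≤ μ.real ({ω | (1 + ε) * m ≤ ({i | ω ∈ A i}.ncard : ℝ)}
          ∪ {ω | ({i | ω ∈ A i}.ncard : ℝ) ≤ (1 - ε) * m}) := by
        refine measureReal_mono fun ω hω ↦ ?_
        rcases lt_abs.1 (mem_ofPred.1 hω) with h | h
        · exact .inl (by simp only [mem_ofPred_eq]; linarith)
        · exact .inr (by simp only [mem_ofPred_eq]; linarith)
    _ ≤ 2 * Real.exp (-(ε ^ 2 * m / 4)) := by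
        linarith [measureReal_union_le (μ := μ) {ω | (1 + ε) * m ≤ ({i | ω ∈ A i}.ncard : ℝ)}
          {ω | ({i | ω ∈ A i}.ncard : ℝ) ≤ (1 - ε) * m}]

end Chernoff

end Probability

section Exploration

variable {V : Type*} {G H : SimpleGraph V} {W A B : Set V} {i j : ℕ} {u : V}

/-- The vertices at distance exactly `j` from the set `W`, that is, those whose nearest vertex of
`W` is at distance `j`. -/
def gLayer (G : SimpleGraph V) (W : Set V) (j : ℕ) : Set V :=
  {u ∈ gBall G W j | ∀ i < j, u ∉ gBall G W i}

/-- The vertices outside `A` having a neighbour in `B`: one step of a breadth-first search that has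
found the vertices of `A`, the last ones being those of `B`. -/
def newNbrs (G : SimpleGraph V) (A B : Set V) : Set V :=
  {u | u ∉ A ∧ ∃ b ∈ B, G.Adj b u}

theorem gBall_mono (hij : i ≤ j) : gBall G W i ⊆ gBall G W j :=
  fun _ ⟨v, hv, hvu⟩ ↦ ⟨v, hv, hvu.trans (mod_cast hij)⟩

theorem gBall_zero : gBall G W 0 = W := by
  ext u
  simp [gBall]

theorem mem_gBall_succ :
    u ∈ gBall G W (j + 1) ↔ u ∈ gBall G W j ∨ ∃ b ∈ gBall G W j, G.Adj b u := by
  refine ⟨fun ⟨v, hv, hvu⟩ ↦ ?_, ?_⟩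
  · rw [edist_comm] at hvu
    obtain ⟨walk, hwalk⟩ := exists_walk_of_edist_ne_top
      (ne_top_of_le_ne_top (ENat.natCast_ne_top _) hvu)
    rw [← hwalk, Nat.cast_le] at hvu
    cases walk with
    | nil => exact .inl ⟨u, hv, by simp⟩
    | @cons _ b _ hub walk =>
      refine .inr ⟨b, ⟨v, hv, ?_⟩, hub.symm⟩
      rw [edist_comm]
      exact (edist_le walk).trans (mod_cast Nat.le_of_succ_le_succ hvu)
  · rintro (hu | ⟨b, ⟨v, hv, hvb⟩, hbu⟩)
    · exact gBall_mono j.le_succ hu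
    · exact ⟨v, hv, SimpleGraph.edist_triangle.trans
        (add_le_add hvb (edist_eq_one_iff_adj.2 hbu).le)⟩

theorem gLayer_zero : gLayer G W 0 = W := by
  simp [gLayer, gBall_zero]

theorem gLayer_subset_gBall : gLayer G W j ⊆ gBall G W j := sep_subset _ _

theorem gLayer_subset_gBall_diff_gLayer (hij : i < j) :
    gLayer G W i ⊆ gBall G W j \ gLayer G W j :=
  fun _ hu ↦ ⟨gBall_mono hij.le hu.1, fun hu' ↦ hu'.2 i hij hu.1⟩

theorem gLayer_succ : gLayer G W (j + 1) = newNbrs G (gBall G W j) (gLayer G W j) := by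
  ext u
  constructor
  · rintro ⟨hu, hu'⟩
    obtain h | ⟨b, hb, hbu⟩ := mem_gBall_succ.1 hu
    · exact absurd h (hu' j j.lt_succ_self)
    · exact ⟨hu' j j.lt_succ_self, b, ⟨hb, fun i hi hbi ↦
        hu' (i + 1) (by lia) (mem_gBall_succ.2 (.inr ⟨b, hbi, hbu⟩))⟩, hbu⟩
  · rintro ⟨hu, b, hb, hbu⟩
    exact ⟨mem_gBall_succ.2 (.inr ⟨b, hb.1, hbu⟩),
      fun i hi hui ↦ hu (gBall_mono (Nat.lt_succ_iff.1 hi) hui)⟩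

theorem gBall_succ : gBall G W (j + 1) = gBall G W j ∪ gLayer G W (j + 1) := by
  refine subset_antisymm (fun u hu ↦ ?_) (union_subset (gBall_mono j.le_succ) gLayer_subset_gBall)
  by_cases huj : u ∈ gBall G W j
  · exact .inl huj
  · exact .inr ⟨hu, fun i hi hui ↦ huj (gBall_mono (Nat.lt_succ_iff.1 hi) hui)⟩

theorem gLayer_singleton {v : V} : gLayer G {v} j = gSphere G v j := by
  ext u
  simp only [gLayer, gBall, gSphere, mem_singleton_iff, exists_eq_left, not_le, mem_ofPred_eq]
  refine ⟨fun ⟨h, h'⟩ ↦ h.antisymm ?_, fun h ↦ ⟨h.le, fun i hi ↦ h ▸ mod_cast hi⟩⟩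
  rcases j with _ | j
  · simp
  · exact mod_cast Order.add_one_le_of_lt (h' j j.lt_succ_self)

theorem gLayer_subset_biUnion_gSphere : gLayer G W j ⊆ ⋃ v ∈ W, gSphere G v j := by
  rintro u ⟨⟨v, hv, hvu⟩, hu⟩
  refine mem_biUnion hv ?_
  rw [← gLayer_singleton]
  exact ⟨⟨v, rfl, hvu⟩, fun i hi ⟨v', hv', hvu'⟩ ↦ hu i hi ⟨v', hv' ▸ hv, hvu'⟩⟩

theorem newNbrs_congr (hGH : ∀ b ∈ B, ∀ u ∉ A, G.Adj b u ↔ H.Adj b u) :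
    newNbrs G A B = newNbrs H A B := by
  ext u
  exact and_congr_right fun hu ↦ exists_congr fun b ↦ and_congr_right fun hb ↦ hGH b hb u hu

theorem gBall_gLayer_congr
    (hGH : ∀ v ∈ gBall G W j \ gLayer G W j, ∀ u, G.Adj v u ↔ H.Adj v u) :
    gBall H W j = gBall G W j ∧ gLayer H W j = gLayer G W j := by
  suffices ∀ k ≤ j, gBall H W k = gBall G W k ∧ gLayer H W k = gLayer G W k from this j le_rfl
  intro k hk
  induction k with
  | zero => simp [gBall_zero, gLayer_zero]
  | succ k ih =>
    obtain ⟨hball, hlayer⟩ := ih (by lia)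
    have hlayer' : gLayer H W (k + 1) = gLayer G W (k + 1) := by
      rw [gLayer_succ, gLayer_succ, hball, hlayer]
      exact (newNbrs_congr fun b hb u _ ↦ hGH b (gLayer_subset_gBall_diff_gLayer hk hb) u).symm
    exact ⟨by rw [gBall_succ, gBall_succ, hball, hlayer'], hlayer'⟩

theorem edgeLocal_gBall_gLayer :
    EdgeLocal {e | ∃ v ∈ A \ B, v ∈ e} ((fun G ↦ (gBall G W j, gLayer G W j)) ⁻¹' {(A, B)}) := by
  suffices ∀ G H : SimpleGraph V, (∀ e ∈ {e | ∃ v ∈ A \ B, v ∈ e}, e ∈ G.edgeSet ↔ e ∈ H.edgeSet) →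
      (gBall G W j, gLayer G W j) = (A, B) → (gBall H W j, gLayer H W j) = (A, B) from
    fun G H hGH ↦ ⟨this G H hGH, this H G fun e he ↦ (hGH e he).symm⟩
  intro G H hGH hG
  rw [Prod.mk.injEq] at hG
  obtain ⟨rfl, rfl⟩ := hG
  rw [Prod.mk.injEq]
  exact gBall_gLayer_congr fun v hv u ↦ hGH s(v, u) ⟨v, hv, Sym2.mem_mk_left v u⟩

end Exploration

section RandomExploration

variable {V : Type*} {A B : Set V} {u : V}

/-- The expected number of vertices found from `B` outside `A ⊇ B`, in the binomial random graph
with edge probability `p`. -/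
noncomputable def meanNewNbrs (p : ℝ) (A B : Set V) : ℝ :=
  Aᶜ.ncard * (1 - (1 - p) ^ B.ncard)

theorem edgeLocal_exists_adj :
    EdgeLocal {e | ∃ b ∈ B, e = s(b, u)} {G | ∃ b ∈ B, G.Adj b u} :=
  fun _ _ hGH ↦ exists_congr fun b ↦ and_congr_right fun hb ↦ hGH s(b, u) ⟨b, hb, rfl⟩

theorem edgeLocal_newNbrs (P : Set V → Prop) :
    EdgeLocal {e | ∃ b ∈ B, ∃ u ∉ A, e = s(b, u)} {G | P (newNbrs G A B)} := by
  intro G H hGH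
  rw [mem_ofPred_eq, mem_ofPred_eq,
    newNbrs_congr fun b hb u hu ↦ hGH s(b, u) ⟨b, hb, u, hu, rfl⟩]

theorem ncard_newNbrs (G : SimpleGraph V) :
    (newNbrs G A B).ncard = {u : ↥Aᶜ | ∃ b ∈ B, G.Adj b u}.ncard := by
  rw [← ncard_image_of_injective _ Subtype.val_injective]
  congr 1
  ext u
  simp [newNbrs, and_comm]

variable [Finite V] {p : I}

theorem binomialRandom_real_exists_adj (hu : u ∉ B) :
    G(V, p).real {G | ∃ b ∈ B, G.Adj b u} = 1 - (1 - p) ^ B.ncard := by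
  have := Fintype.ofFinite B
  have not_adj (b : B) : G(V, p).real {G | ¬ G.Adj b u} = 1 - p := by
    rw [← binomialRandom_real_adj (p := p) (ne_of_mem_of_not_mem b.2 hu)]
    exact probReal_compl_eq_one_sub .of_discrete
  have indep : iIndepSet (fun b : B ↦ {G : SimpleGraph V | ¬ G.Adj b u}) G(V, p) := by
    refine EdgeLocal.iIndepSet (F := fun b : B ↦ {s(↑b, u)})
      (fun b G H hGH ↦ not_congr (hGH _ (mem_singleton s(↑b, u)))) fun b b' hb ↦ ?_
    simp only [disjoint_singleton, ne_eq, Sym2.congr_left]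
    exact Subtype.val_injective.ne hb
  have no_adj : {G : SimpleGraph V | ∃ b ∈ B, G.Adj b u}ᶜ =
      ⋂ b ∈ (Finset.univ : Finset B), {G | ¬ G.Adj b u} := by ext; simp
  rw [← compl_compl {G : SimpleGraph V | _}, probReal_compl_eq_one_sub .of_discrete, no_adj,
    measureReal_def, indep.meas_biInter, ENNReal.toReal_prod]
  simp only [← measureReal_def, not_adj, Finset.prod_const, Finset.card_univ,
    ← Nat.card_eq_fintype_card, Nat.card_coe_set_eq]

theorem iIndepSet_exists_adj (hBA : B ⊆ A) :
    iIndepSet (fun (u : ↥Aᶜ) ↦ {G : SimpleGraph V | ∃ b ∈ B, G.Adj b u}) G(V, p) := by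
  refine EdgeLocal.iIndepSet (fun u ↦ edgeLocal_exists_adj) fun u u' huu' ↦ ?_
  refine Set.disjoint_left.2 ?_
  rintro _ ⟨b, -, rfl⟩ ⟨b', hb', h⟩
  rcases Sym2.eq_iff.1 h with ⟨-, h⟩ | ⟨-, h⟩
  · exact huu' (Subtype.ext h)
  · exact u.2 (hBA (h ▸ hb'))

theorem binomialRandom_real_lt_abs_ncard_newNbrs_sub_le (hBA : B ⊆ A) {ε : ℝ} (hε₀ : 0 ≤ ε)
    (hε₁ : ε ≤ 1) :
    G(V, p).real {G | ε * meanNewNbrs p A B < |(newNbrs G A B).ncard - meanNewNbrs p A B|}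
      ≤ 2 * Real.exp (-(ε ^ 2 * meanNewNbrs p A B / 4)) := by
  have := Fintype.ofFinite ↥Aᶜ
  simp only [ncard_newNbrs]
  refine measureReal_lt_abs_ncard_sub_le (fun _ ↦ .of_discrete) (iIndepSet_exists_adj hBA) ?_
    hε₀ hε₁
  simp only [fun u : ↥Aᶜ ↦ binomialRandom_real_exists_adj (p := p) fun hu : ↑u ∈ B ↦ u.2 (hBA hu)]
  rw [Finset.sum_const, Finset.card_univ, nsmul_eq_mul, ← Nat.card_eq_fintype_card,
    Nat.card_coe_set_eq, meanNewNbrs]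

/-- The event that the step of the breadth-first search from `W` leading from level `j` to level
`j + 1` goes wrong: the size of level `j + 1` deviates from its mean, conditional on the first `j`
levels, by more than `ε` times that mean. Only the case that this mean is at least `M` counts, so
that the probability of the event is small for every `W`. -/
def deviantStep (p : ℝ) (W : Set V) (j : ℕ) (M ε : ℝ) : Set (SimpleGraph V) :=
  {G | M ≤ meanNewNbrs p (gBall G W j) (gLayer G W j) ∧
    ε * meanNewNbrs p (gBall G W j) (gLayer G W j) <
      |(gLayer G W (j + 1)).ncard - meanNewNbrs p (gBall G W j) (gLayer G W j)|}

theorem binomialRandom_real_deviantStep_le {W : Set V} {j : ℕ} {M ε : ℝ} (hε₀ : 0 ≤ ε)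
    (hε₁ : ε ≤ 1) :
    G(V, p).real (deviantStep p W j M ε) ≤ 2 * Real.exp (-(ε ^ 2 * M / 4)) := by
  simp only [deviantStep, gLayer_succ]
  refine measureReal_mem_state_le (state := fun G ↦ (gBall G W j, gLayer G W j))
    (B := fun s ↦ {G | M ≤ meanNewNbrs p s.1 s.2 ∧ ε * meanNewNbrs p s.1 s.2 <
      |(newNbrs G s.1 s.2).ncard - meanNewNbrs p s.1 s.2|}) (fun _ ↦ .of_discrete)
    (fun G ↦ ?_) fun G ↦ ?_
  · refine edgeLocal_gBall_gLayer.indepSet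
      (edgeLocal_newNbrs fun N ↦ _ ∧ _ < |(N.ncard : ℝ) - _|) ?_
    rw [Set.disjoint_left]
    rintro _ ⟨v, hv, hvb⟩ ⟨b, hb, u, hu, rfl⟩
    rcases Sym2.mem_iff.1 hvb with rfl | rfl
    · exact hv.2 hb
    · exact hu hv.1
  · by_cases hM : M ≤ meanNewNbrs p (gBall G W j) (gLayer G W j)
    · simp only [hM, true_and]
      grw [binomialRandom_real_lt_abs_ncard_newNbrs_sub_le gLayer_subset_gBall hε₀ hε₁, hM]
    · simp only [hM, false_and, ofPred_false, measureReal_empty]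
      positivity

end RandomExploration

section Growth

theorem one_sub_pow_le {p : ℝ} (hp₀ : 0 ≤ p) (hp₁ : p ≤ 1) (b : ℕ) :
    (1 - p) ^ b ≤ 1 - p * b * (1 - p * b) := by
  have bernoulli : 1 + b * p ≤ (1 + p) ^ b := one_add_mul_le_pow (by linarith) b
  have reciprocal : (1 - p) ^ b * (1 + b * p) ≤ 1 :=
    calc (1 - p) ^ b * (1 + b * p)
        ≤ (1 - p) ^ b * (1 + p) ^ b :=
          mul_le_mul_of_nonneg_left bernoulli (pow_nonneg (by linarith) b)
      _ = (1 - p ^ 2) ^ b := by rw [← mul_pow]; ring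
      _ ≤ 1 := pow_le_one₀ (by nlinarith) (by nlinarith)
  have hpb : 0 ≤ p * b := by positivity
  refine le_of_mul_le_mul_right (a := 1 + b * p) ?_ (by linarith)
  nlinarith [pow_nonneg hpb 3]

variable {V : Type*} [Finite V] {p : ℝ} {A B : Set V}

theorem meanNewNbrs_le (hp₀ : 0 ≤ p) (hp₁ : p ≤ 1) :
    meanNewNbrs p A B ≤ p * Nat.card V * B.ncard := by
  have bernoulli : 1 - p * B.ncard ≤ (1 - p) ^ B.ncard := by
    linarith [one_add_mul_sub_le_pow (a := 1 - p) (by linarith) B.ncard]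
  have hA : (Aᶜ.ncard : ℝ) ≤ Nat.card V := mod_cast ncard_le_card _
  calc meanNewNbrs p A B ≤ Nat.card V * (p * B.ncard) := by
        exact mul_le_mul hA (by linarith) (sub_nonneg.2 (pow_le_one₀ (by linarith) (by linarith)))
          (Nat.cast_nonneg _)
    _ = p * Nat.card V * B.ncard := by ring

theorem le_meanNewNbrs (hp₀ : 0 ≤ p) (hp₁ : p ≤ 1) :
    p * B.ncard * (Nat.card V - (A.ncard + p * Nat.card V * B.ncard)) ≤ meanNewNbrs p A B := by
  have hA : (A.ncard : ℝ) + Aᶜ.ncard = Nat.card V := mod_cast ncard_add_ncard_compl A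
  calc p * B.ncard * (Nat.card V - (A.ncard + p * Nat.card V * B.ncard))
      ≤ Aᶜ.ncard * (p * B.ncard * (1 - p * B.ncard)) := by
        rw [← hA]
        have : 0 ≤ (A.ncard : ℝ) * (p * B.ncard) ^ 2 := by positivity
        linarith
    _ ≤ meanNewNbrs p A B := by
        unfold meanNewNbrs
        gcongr
        linarith [one_sub_pow_le hp₀ hp₁ B.ncard]

theorem mean_bounds_of_level_bounds {a b m D s d n : ℝ} (hd : 4 ≤ d) (hn : 0 < n) (hD : 0 ≤ D)
    (hs₀ : 0 ≤ s) (hs : s ≤ 1 / 8) (hDn : d * D / n ≤ 1 / 100) (ha : a ≤ 2 * D)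
    (hb_le : b ≤ (1 + 2 * s) * D) (hle_b : (1 - s - 3 * (D / n)) * D ≤ b) (hm_le : m ≤ d * b)
    (hle_m : d * b * (1 - (a + d * b) / n) ≤ m) :
    (1 - s - 3 * (d * D / n)) * (d * D) ≤ m ∧ m ≤ (1 + 2 * s) * (d * D) := by
  set E := d * D
  set η := E / n
  have hDE : 4 * D ≤ E := mul_le_mul_of_nonneg_right hd hD
  have : 0 ≤ E := by linarith
  have : 0 ≤ η := by positivity
  have hDη : 4 * (D / n) ≤ η := by
    rw [← mul_div_assoc]
    exact div_le_div_of_nonneg_right hDE hn.le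
  have hdb_le : d * b ≤ (1 + 2 * s) * E :=
    (mul_le_mul_of_nonneg_left hb_le (by linarith)).trans_eq (by ring)
  have hle_db : (1 - s - 3 / 4 * η) * E ≤ d * b :=
    calc (1 - s - 3 / 4 * η) * E = d * ((1 - s - 3 / 4 * η) * D) := by ring
      _ ≤ d * b := by
        gcongr
        exact (mul_le_mul_of_nonneg_right (by linarith) hD).trans hle_b
  have explored_le : (a + d * b) / n ≤ 2 * η := by
    rw [← mul_div_assoc]
    gcongr
    nlinarith
  refine ⟨?_, hm_le.trans hdb_le⟩
  calc (1 - s - 3 * η) * E ≤ (1 - s - 3 / 4 * η) * E * (1 - 2 * η) := by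
        have : 0 ≤ E * (η * (1 / 4 + 2 * s + 3 / 2 * η)) := by positivity
        linarith
    _ ≤ d * b * (1 - 2 * η) := by gcongr; linarith
    _ ≤ d * b * (1 - (a + d * b) / n) := by
        have : 0 ≤ d * b := by nlinarith
        gcongr
    _ ≤ m := hle_m

theorem next_level_bounds_of_mean_bounds {b m E s ε η : ℝ} (hE : 0 ≤ E) (hs : 0 ≤ s) (hε : 0 ≤ ε)
    (hη : 0 ≤ η) (hsε : s + ε ≤ 1 / 8) (hη_le : η ≤ 1 / 100) (hle_m : (1 - s - 3 * η) * E ≤ m)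
    (hm_le : m ≤ (1 + 2 * s) * E) (hb : E / 4 ≤ m → |b - m| ≤ ε * m) :
    (1 - (s + ε) - 3 * η) * E ≤ b ∧ b ≤ (1 + 2 * (s + ε)) * E := by
  have hm : E / 4 ≤ m :=
    calc E / 4 ≤ (1 - s - 3 * η) * E := by
          rw [div_eq_inv_mul]
          gcongr
          linarith
      _ ≤ m := hle_m
  obtain ⟨hlower, hupper⟩ := abs_le.1 (hb hm)
  constructor
  · calc (1 - (s + ε) - 3 * η) * E ≤ (1 - ε) * ((1 - s - 3 * η) * E) := by
          have : 0 ≤ ε * (s + 3 * η) * E := by positivity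
          linarith
      _ ≤ (1 - ε) * m := by gcongr; linarith
      _ ≤ b := by linarith
  · calc b ≤ (1 + ε) * m := by linarith
      _ ≤ (1 + ε) * ((1 + 2 * s) * E) := by gcongr
      _ ≤ (1 + 2 * (s + ε)) * E := by
        have : 0 ≤ 1 - 2 * s := by linarith
        have : 0 ≤ ε * (1 - 2 * s) * E := by positivity
        linarith

theorem abs_sub_mul_pow_le {a b m ε : ℕ → ℝ} {w d n : ℝ} {i : ℕ} (hw : 0 ≤ w) (hd : 4 ≤ d)
    (hn : 0 < n) (hε : ∀ j, 0 ≤ ε j) (hε_sum : ∑ j ∈ Finset.range i, ε j ≤ 1 / 8)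
    (hdi : w * d ^ i / n ≤ 1 / 100) (ha₀ : a 0 = w) (hb₀ : b 0 = w)
    (ha : ∀ j < i, a (j + 1) ≤ a j + b (j + 1)) (hm_le : ∀ j < i, m j ≤ d * b j)
    (hle_m : ∀ j < i, d * b j * (1 - (a j + d * b j) / n) ≤ m j)
    (hb : ∀ j < i, w * d ^ (j + 1) / 4 ≤ m j → |b (j + 1) - m j| ≤ ε j * m j) :
    |b i - w * d ^ i| ≤ (2 * ∑ j ∈ Finset.range i, ε j + 3 * (w * d ^ i / n)) * (w * d ^ i) := by
  have hσ (j : ℕ) : 0 ≤ ∑ k ∈ Finset.range j, ε k := Finset.sum_nonneg fun k _ ↦ hε k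
  have invariant (j : ℕ) (hj : j ≤ i) : a j ≤ 2 * (w * d ^ j) ∧
      (1 - ∑ k ∈ Finset.range j, ε k - 3 * (w * d ^ j / n)) * (w * d ^ j) ≤ b j ∧
      b j ≤ (1 + 2 * ∑ k ∈ Finset.range j, ε k) * (w * d ^ j) := by
    induction j with
    | zero =>
      have : 0 ≤ w / n * w := by positivity
      simp only [pow_zero, mul_one, Finset.range_zero, Finset.sum_empty, ha₀, hb₀]
      exact ⟨by linarith, by linarith, by linarith⟩
    | succ j ih =>
      obtain ⟨ha_le, hle_b, hb_le⟩ := ih (by lia)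
      have hD : 0 ≤ w * d ^ j := by positivity
      have hpow : w * d ^ (j + 1) = d * (w * d ^ j) := by ring
      have hsum : ∑ k ∈ Finset.range (j + 1), ε k ≤ 1 / 8 :=
        (Finset.sum_le_sum_of_subset_of_nonneg (Finset.range_mono hj) fun k _ _ ↦ hε k).trans hε_sum
      have hdj : w * d ^ (j + 1) / n ≤ 1 / 100 := by
        refine le_trans ?_ hdi
        gcongr
        linarith
      specialize hb j hj
      rw [Finset.sum_range_succ] at hsum ⊢
      rw [hpow] at hdj hb ⊢
      obtain ⟨hm_lower, hm_upper⟩ := mean_bounds_of_level_bounds hd hn hD (hσ j)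
        (by linarith [hε j]) hdj ha_le hb_le hle_b (hm_le j hj) (hle_m j hj)
      obtain ⟨hlower, hupper⟩ := next_level_bounds_of_mean_bounds (by positivity) (hσ j) (hε j)
        (by positivity) hsum hdj hm_lower hm_upper hb
      have : 4 * (w * d ^ j) ≤ d * (w * d ^ j) := mul_le_mul_of_nonneg_right hd hD
      have : b (j + 1) ≤ (1 + 2 * (1 / 8)) * (d * (w * d ^ j)) := hupper.trans (by gcongr)
      exact ⟨by linarith [ha j hj], hlower, hupper⟩
  obtain ⟨-, hlower, hupper⟩ := invariant i le_rfl
  have : 0 ≤ w * d ^ i / n * (w * d ^ i) := by positivity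
  have : 0 ≤ (∑ j ∈ Finset.range i, ε j) * (w * d ^ i) := mul_nonneg (hσ i) (by positivity)
  exact abs_le.2 ⟨by linarith, by linarith⟩

end Growth

section SphereExpansion

variable {V : Type*} [Finite V] {G : SimpleGraph V} {i k : ℕ}

theorem abs_ncard_gLayer_sub_le {W : Set V} {p d : ℝ} {ε : ℕ → ℝ} (hW : W.Nonempty) (hp₀ : 0 ≤ p)
    (hp₁ : p ≤ 1) (hd : d = p * Nat.card V) (hd₄ : 4 ≤ d) (hε : ∀ j, 0 ≤ ε j)
    (hε_sum : ∑ j ∈ Finset.range i, ε j ≤ 1 / 8) (hdi : W.ncard * d ^ i / Nat.card V ≤ 1 / 100)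
    (hG : ∀ j < i, G ∉ deviantStep p W j (d ^ (j + 1) / 4) (ε j)) :
    |(gLayer G W i).ncard - W.ncard * d ^ i| ≤
      (2 * ∑ j ∈ Finset.range i, ε j + 3 * (W.ncard * d ^ i / Nat.card V)) * (W.ncard * d ^ i) := by
  have hn : (0 : ℝ) < Nat.card V := by
    have := hW.to_subtype.map (Subtype.val : W → V)
    exact_mod_cast Nat.card_pos
  refine abs_sub_mul_pow_le (a := fun j ↦ (gBall G W j).ncard) (b := fun j ↦ (gLayer G W j).ncard)
    (m := fun j ↦ meanNewNbrs p (gBall G W j) (gLayer G W j)) W.ncard.cast_nonneg hd₄ hn hε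
    hε_sum hdi (by simp only [gBall_zero]) (by simp only [gLayer_zero]) (fun j _ ↦ ?_)
    (fun j _ ↦ hd ▸ meanNewNbrs_le hp₀ hp₁) (fun j _ ↦ ?_) fun j hj hM ↦ ?_
  · exact mod_cast gBall_succ ▸ ncard_union_le _ _
  · refine (le_meanNewNbrs hp₀ hp₁).trans_eq' ?_
    rw [hd]
    field_simp
  · by_contra! hdev
    have hM' : 1 * d ^ (j + 1) ≤ W.ncard * d ^ (j + 1) := by
      gcongr
      exact_mod_cast hW.ncard_pos
    exact hG j hj ⟨by linarith, hdev⟩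

/-- The graphs in which any union of at most `k` spheres of radius `i` has size `D` per centre, and
any difference of two such spheres has size `D`, up to a relative error `η`. -/
def sphereExpansion (V : Type*) (k i : ℕ) (D η : ℝ) : Set (SimpleGraph V) :=
  {G | (∀ W : Finset V, #W ≤ k →
      |((⋃ v ∈ W, gSphere G v i).ncard : ℝ) - D * #W| ≤ η * (D * #W)) ∧
    ∀ x y : V, x ≠ y → |((gSphere G x i \ gSphere G y i).ncard : ℝ) - D| ≤ η * D}

omit [Finite V] in
theorem sphereExpansion_subset {k' : ℕ} {D η η' : ℝ} (hk : k ≤ k') (hD : 0 ≤ D) (hη : η' ≤ η) :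
    sphereExpansion V k' i D η' ⊆ sphereExpansion V k i D η :=
  fun _ ⟨hunion, hdiff⟩ ↦
    ⟨fun W hW ↦ (hunion W (hW.trans hk)).trans (mul_le_mul_of_nonneg_right hη (by positivity)),
      fun x y hxy ↦ (hdiff x y hxy).trans (mul_le_mul_of_nonneg_right hη hD)⟩

theorem mem_sphereExpansion_of_gLayer {D η : ℝ} (hk : 2 ≤ k) (hD : 0 ≤ D) (hη : 0 ≤ η)
    (hG : ∀ W : Finset V, W.Nonempty → #W ≤ k →
      |((gLayer G W i).ncard : ℝ) - #W * D| ≤ η * (#W * D)) :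
    G ∈ sphereExpansion V k i D (3 * η) := by
  classical
  have hηD : 0 ≤ η * D := mul_nonneg hη hD
  have sphere_le (v : V) : ((gSphere G v i).ncard : ℝ) ≤ (1 + η) * D := by
    have := (abs_le.1 (hG {v} (Finset.singleton_nonempty v) (by simp; lia))).2
    simp only [Finset.coe_singleton, gLayer_singleton, Finset.card_singleton, Nat.cast_one] at this
    linarith
  have union_le (W : Finset V) : ((⋃ v ∈ W, gSphere G v i).ncard : ℝ) ≤ (1 + η) * (D * #W) :=
    calc ((⋃ v ∈ W, gSphere G v i).ncard : ℝ) ≤ ∑ v ∈ W, ((gSphere G v i).ncard : ℝ) :=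
          mod_cast Finset.set_ncard_biUnion_le W _
      _ ≤ #W * ((1 + η) * D) := by
          rw [← nsmul_eq_mul]
          exact Finset.sum_le_card_nsmul _ _ _ fun v _ ↦ sphere_le v
      _ = (1 + η) * (D * #W) := by ring
  have le_union (W : Finset V) (hW : #W ≤ k) :
      (1 - η) * (D * #W) ≤ ((⋃ v ∈ W, gSphere G v i).ncard : ℝ) := by
    rcases W.eq_empty_or_nonempty with rfl | hne
    · simp
    · have : ((gLayer G W i).ncard : ℝ) ≤ (⋃ v ∈ W, gSphere G v i).ncard :=
        mod_cast ncard_le_ncard gLayer_subset_biUnion_gSphere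
      linarith [(abs_le.1 (hG W hne hW)).1]
  refine ⟨fun W hW ↦ abs_le.2 ?_, fun x y hxy ↦ abs_le.2 ?_⟩
  · have : 0 ≤ η * (D * #W) := by positivity
    constructor <;> linarith [union_le W, le_union W hW]
  · have le_pair := le_union {x, y} (by rwa [Finset.card_pair hxy])
    rw [Finset.set_biUnion_insert, Finset.set_biUnion_singleton, Finset.card_pair hxy,
      ← ncard_sdiff_add_ncard, Nat.cast_add, Nat.cast_ofNat] at le_pair
    have diff_le : ((gSphere G x i \ gSphere G y i).ncard : ℝ) ≤ (gSphere G x i).ncard :=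
      mod_cast ncard_le_ncard sdiff_subset
    constructor <;> linarith [sphere_le x, sphere_le y]

theorem mem_sphereExpansion_of_notMem_deviantStep {p d : ℝ} {ε : ℕ → ℝ} (hk : 2 ≤ k) (hp₀ : 0 ≤ p)
    (hp₁ : p ≤ 1) (hd : d = p * Nat.card V) (hd₄ : 4 ≤ d) (hε : ∀ j, 0 ≤ ε j)
    (hε_sum : ∑ j ∈ Finset.range i, ε j ≤ 1 / 8) (hdi : k * (d ^ i / Nat.card V) ≤ 1 / 100)
    (hG : ∀ W : Finset V, W.Nonempty → #W ≤ k →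
      ∀ j < i, G ∉ deviantStep p W j (d ^ (j + 1) / 4) (ε j)) :
    G ∈ sphereExpansion V k i (d ^ i)
      (3 * (2 * ∑ j ∈ Finset.range i, ε j + 3 * (k * (d ^ i / Nat.card V)))) := by
  have hε_nonneg : 0 ≤ ∑ j ∈ Finset.range i, ε j := Finset.sum_nonneg fun j _ ↦ hε j
  refine mem_sphereExpansion_of_gLayer hk (by positivity) (by positivity) fun W hW hWk ↦ ?_
  have size_le : #W * d ^ i / Nat.card V ≤ k * (d ^ i / Nat.card V) := by
    rw [mul_div_assoc]
    gcongr
  have layer := abs_ncard_gLayer_sub_le (Finset.coe_nonempty.2 hW) hp₀ hp₁ hd hd₄ hε hε_sum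
    (by rw [ncard_coe_finset]; exact size_le.trans hdi) (hG W hW hWk)
  rw [ncard_coe_finset] at layer
  exact layer.trans (by gcongr)

end SphereExpansion

section UnionBound

theorem exists_range_eq {V : Type*} {k : ℕ} {W : Finset V} (hW : W.Nonempty) (hWk : #W ≤ k) :
    ∃ f : Fin k → V, range f = W := by
  obtain ⟨w, hw⟩ := hW
  obtain ⟨f, hf⟩ := (Function.exists_surjective_iff (α := Fin k) (β := W)).2
    ⟨⟨fun _ ↦ ⟨w, hw⟩⟩, Function.Embedding.nonempty_of_card_le (by simpa)⟩
  exact ⟨Subtype.val ∘ f, by simp [range_comp, hf.range_eq]⟩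

variable {V : Type*} [Finite V] {p : I} {d : ℝ} {i k : ℕ}

theorem one_sub_le_binomialRandom_real_sphereExpansion {ε : ℕ → ℝ} (hk : 2 ≤ k)
    (hd : d = p * Nat.card V) (hd₄ : 4 ≤ d) (hε : ∀ j, 0 ≤ ε j)
    (hε_sum : ∑ j ∈ Finset.range i, ε j ≤ 1 / 8) (hdi : k * (d ^ i / Nat.card V) ≤ 1 / 100) :
    1 - Nat.card V ^ k * ∑ j ∈ Finset.range i, 2 * Real.exp (-(ε j ^ 2 * d ^ (j + 1) / 16)) ≤
      G(V, p).real (sphereExpansion V k i (d ^ i)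
        (3 * (2 * ∑ j ∈ Finset.range i, ε j + 3 * (k * (d ^ i / Nat.card V))))) := by
  have := Fintype.ofFinite V
  set good := sphereExpansion V k i (d ^ i)
    (3 * (2 * ∑ j ∈ Finset.range i, ε j + 3 * (k * (d ^ i / Nat.card V))))
  let bad (f : Fin k → V) (j : ℕ) := deviantStep p (range f) j (d ^ (j + 1) / 4) (ε j)
  have bad_le (f : Fin k → V) (j : ℕ) (hj : j ∈ Finset.range i) :
      G(V, p).real (bad f j) ≤ 2 * Real.exp (-(ε j ^ 2 * d ^ (j + 1) / 16)) := by
    have hε₁ : ε j ≤ 1 :=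
      (Finset.single_le_sum (fun j _ ↦ hε j) hj).trans (hε_sum.trans (by norm_num))
    refine (binomialRandom_real_deviantStep_le (hε j) hε₁).trans_eq ?_
    ring_nf
  have compl_subset : goodᶜ ⊆ ⋃ f, ⋃ j ∈ Finset.range i, bad f j := by
    refine compl_subset_comm.1 fun G hG ↦ ?_
    refine mem_sphereExpansion_of_notMem_deviantStep hk p.2.1 p.2.2 hd hd₄ hε hε_sum hdi ?_
    intro W hW hWk j hj hbad
    obtain ⟨f, hf⟩ := exists_range_eq hW hWk
    rw [← hf] at hbad
    exact hG (mem_iUnion.2 ⟨f, mem_biUnion (Finset.mem_coe.2 (Finset.mem_range.2 hj)) hbad⟩)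
  have compl_le :=
    calc G(V, p).real goodᶜ ≤ G(V, p).real (⋃ f, ⋃ j ∈ Finset.range i, bad f j) :=
          measureReal_mono compl_subset
      _ ≤ ∑ f, ∑ j ∈ Finset.range i, G(V, p).real (bad f j) :=
          (measureReal_iUnion_fintype_le _).trans <|
            Finset.sum_le_sum fun f _ ↦ measureReal_biUnion_finset_le _ _
      _ ≤ ∑ f : Fin k → V, ∑ j ∈ Finset.range i, 2 * Real.exp (-(ε j ^ 2 * d ^ (j + 1) / 16)) :=
          Finset.sum_le_sum fun f _ ↦ Finset.sum_le_sum (bad_le f)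
      _ = Nat.card V ^ k * ∑ j ∈ Finset.range i, 2 * Real.exp (-(ε j ^ 2 * d ^ (j + 1) / 16)) := by
          simp
  rw [probReal_compl_eq_one_sub .of_discrete] at compl_le
  linarith

end UnionBound

section Parameters

theorem sum_pow_succ_le {r : ℝ} (hr₀ : 0 ≤ r) (hr : r ≤ 2⁻¹) (i : ℕ) :
    ∑ j ∈ Finset.range i, r ^ (j + 1) ≤ 2 * r := by
  have hr₁ : r < 1 := by linarith
  calc ∑ j ∈ Finset.range i, r ^ (j + 1) = r * ∑ j ∈ Finset.range i, r ^ j := by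
        simp only [pow_succ', Finset.mul_sum]
    _ ≤ r * (1 - r)⁻¹ := by
        rw [← tsum_geometric_of_lt_one hr₀ hr₁]
        gcongr
        exact (summable_geometric_of_lt_one hr₀ hr₁).sum_le_tsum _ fun j _ ↦ by positivity
    _ ≤ r * (2⁻¹)⁻¹ := by gcongr; linarith
    _ = 2 * r := by rw [inv_inv, mul_comm]

theorem sum_sqrt_mul_inv_sqrt_pow_le {d w L : ℝ} (hd : 4 ≤ d) (hw : 0 < w) (hwd : w * L ≤ d)
    (i : ℕ) : ∑ j ∈ Finset.range i, √L * (√d)⁻¹ ^ (j + 1) ≤ 2 * (1 / √w) := by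
  have hsqrt : (√d)⁻¹ ≤ 2⁻¹ := inv_anti₀ two_pos (Real.le_sqrt_of_sq_le (by linarith))
  calc ∑ j ∈ Finset.range i, √L * (√d)⁻¹ ^ (j + 1)
      = √L * ∑ j ∈ Finset.range i, (√d)⁻¹ ^ (j + 1) := (Finset.mul_sum ..).symm
    _ ≤ √L * (2 * (√d)⁻¹) := by
        gcongr
        exact sum_pow_succ_le (by positivity) hsqrt i
    _ = 2 * (√L / √d) := by ring
    _ ≤ 2 * (1 / √w) := by
        rw [← Real.sqrt_div' _ (by linarith), one_div, ← Real.sqrt_inv, inv_eq_one_div]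
        gcongr 2 * √?_
        rwa [div_le_div_iff₀ (by linarith) hw, one_mul, mul_comm]

theorem sq_mul_sqrt_mul_inv_sqrt_pow_mul_pow {c d L : ℝ} (hc : 0 ≤ c) (hd : 0 < d) (hL : 0 ≤ L)
    (j : ℕ) : (4 * √c * (√L * (√d)⁻¹ ^ j)) ^ 2 * d ^ j / 16 = c * L := by
  simp only [mul_pow, inv_pow, ← pow_mul]
  rw [mul_comm j 2, pow_mul √d, Real.sq_sqrt hc, Real.sq_sqrt hd.le, Real.sq_sqrt hL]
  field_simp
  ring

theorem natCast_le_of_pow_le {i : ℕ} {d x : ℝ} (hd : 2 ≤ d) (hx : d ^ i ≤ x) : (i : ℝ) ≤ x :=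
  calc (i : ℝ) ≤ 2 ^ i := mod_cast Nat.lt_two_pow_self.le
    _ ≤ d ^ i := by gcongr
    _ ≤ x := hx

variable {V : Type*} [Finite V] {p : I} {d w : ℝ} {i k : ℕ}

theorem one_sub_two_div_le_binomialRandom_real_sphereExpansion (hk : 2 ≤ k)
    (hd : d = p * Nat.card V) (hd₄ : 4 ≤ d) (hw : 0 < w) (hwd : w * Real.log (Nat.card V) ≤ d)
    (hwk : 8 * √(k + 2) * (1 / √w) ≤ 1 / 8) (hdi : k * (d ^ i / Nat.card V) ≤ 1 / 100) :
    1 - 2 / Nat.card V ≤ G(V, p).real (sphereExpansion V k i (d ^ i)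
      ((48 * √(k + 2) + 9 * k) * (1 / √w + d ^ i / Nat.card V))) := by
  set n := Nat.card V
  have hn : 0 < n := Nat.pos_of_ne_zero fun hn ↦ by
    rw [hn, Nat.cast_zero, mul_zero] at hd
    linarith
  -- With this choice each step deviates with probability at most `2 / n ^ (k + 2)`.
  set ε : ℕ → ℝ := fun j ↦ 4 * √(k + 2) * (√(Real.log n) * (√d)⁻¹ ^ (j + 1))
  have hε_sum : ∑ j ∈ Finset.range i, ε j ≤ 8 * √(k + 2) * (1 / √w) := by
    rw [← Finset.mul_sum]
    linarith [mul_le_mul_of_nonneg_left (sum_sqrt_mul_inv_sqrt_pow_le hd₄ hw hwd i)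
      (by positivity : 0 ≤ 4 * √(k + 2 : ℝ))]
  have exp_neg (j : ℕ) : Real.exp (-(ε j ^ 2 * d ^ (j + 1) / 16)) = 1 / n ^ (k + 2) := by
    rw [sq_mul_sqrt_mul_inv_sqrt_pow_mul_pow (by positivity) (by linarith)
      (Real.log_natCast_nonneg n), ← Nat.cast_ofNat, ← Nat.cast_add, Real.exp_neg,
      Real.exp_nat_mul, Real.exp_log (mod_cast hn), one_div]
  have hi : (i : ℝ) ≤ n := by
    refine natCast_le_of_pow_le (d := d) (by linarith) ((div_le_one (mod_cast hn)).1 ?_)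
    have : 1 * (d ^ i / n) ≤ k * (d ^ i / n) := by gcongr; norm_cast; lia
    linarith
  calc 1 - 2 / (n : ℝ)
      ≤ 1 - n ^ k * ∑ j ∈ Finset.range i, 2 * Real.exp (-(ε j ^ 2 * d ^ (j + 1) / 16)) := by
        simp only [exp_neg, Finset.sum_const, Finset.card_range, nsmul_eq_mul]
        gcongr
        calc (n : ℝ) ^ k * (i * (2 * (1 / n ^ (k + 2)))) = 2 / n * (i / n) := by
              field_simp
              ring
          _ ≤ 2 / n := mul_le_of_le_one_right (by positivity) (by bound)
    _ ≤ _ := one_sub_le_binomialRandom_real_sphereExpansion hk hd hd₄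
          (fun j ↦ by positivity) (hε_sum.trans hwk) hdi
    _ ≤ _ := measureReal_mono <| sphereExpansion_subset le_rfl (by positivity) <| by
          have : 0 ≤ 48 * √(k + 2) * (d ^ i / n) + 9 * k * (1 / √w) := by positivity
          linarith

end Parameters

theorem gnpProb_eq_binomialRandom_real (n : ℕ) (p : I) (A : Set (SimpleGraph (Fin n))) :
    gnpProb n p A = G(Fin n, p).real A := by
  classical
  have singleton (G : SimpleGraph (Fin n)) : G(Fin n, p).real {G} =
      p ^ Nat.card G.edgeSet * (1 - p) ^ (n.choose 2 - Nat.card G.edgeSet) := by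
    rw [measureReal_def, binomialRandom_singleton, Nat.card_coe_set_eq, Nat.card_fin]
    simp
  simp only [gnpProb, ← singleton]
  rw [sum_measureReal_singleton]
  simp

theorem eventually_four_le_of_mul_log_le {d ω : ℕ → ℝ} (hω : Tendsto ω atTop atTop)
    (hωd : ∀ᶠ n : ℕ in atTop, ω n * Real.log n ≤ d n) : ∀ᶠ n in atTop, 4 ≤ d n :=
  have hωlog := hω.atTop_mul_atTop₀ (Real.tendsto_log_atTop.comp tendsto_natCast_atTop_atTop)
  (hωlog.eventually_ge_atTop 4).mp (hωd.mono fun _ hd h ↦ h.trans hd)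

theorem aas_of_eventually_one_sub_le {p δ : ℕ → ℝ} {A : (n : ℕ) → Set (SimpleGraph (Fin n))}
    (hδ : Tendsto δ atTop (𝓝 0))
    (hA : ∀ᶠ n in atTop, ∃ q : I, p n = q ∧ 1 - δ n ≤ G(Fin n, q).real (A n)) : AAS p A := by
  have hδ' : Tendsto (fun n ↦ 1 - δ n) atTop (𝓝 1) := by simpa using hδ.const_sub 1
  refine tendsto_of_tendsto_of_tendsto_of_le_of_le' hδ' tendsto_const_nhds
    (hA.mono fun n ↦ ?_) (hA.mono fun n ↦ ?_)
  all_goals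
    rintro ⟨q, hq, hAq⟩
    rw [hq, gnpProb_eq_binomialRandom_real]
  · exact hAq
  · exact measureReal_le_one

theorem eventually_le_one_of_tendsto_div {p d : ℕ → ℝ} (hd : ∀ n, d n = p n * n)
    (hdn : Tendsto (fun n : ℕ ↦ d n / n) atTop (𝓝 0)) : ∀ᶠ n in atTop, p n ≤ 1 := by
  filter_upwards [hdn.eventually_le_const one_pos, eventually_ne_atTop 0] with n hn hn₀
  rwa [hd, mul_div_cancel_right₀ _ (Nat.cast_ne_zero.2 hn₀)] at hn

theorem stmt4_gnp_sphere_expansion_general (k : ℕ) :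
    ∃ C : ℝ, 0 < C ∧ ∀ (p d ω : ℕ → ℝ) (i : ℕ → ℕ), (∀ n, d n = p n * n) →
      Tendsto ω atTop atTop → (∀ᶠ n : ℕ in atTop, ω n * Real.log n ≤ d n) →
      (∀ᶠ n in atTop, p n ≤ 1) → Tendsto (fun n : ℕ ↦ d n ^ i n / n) atTop (𝓝 0) →
      AAS p fun n ↦ {G : SimpleGraph (Fin n) |
        (∀ W : Finset (Fin n), #W ≤ k →
          |((⋃ v ∈ W, gSphere G v (i n)).ncard : ℝ) - d n ^ i n * #W|
            ≤ C * (1 / √(ω n) + d n ^ i n / n) * (d n ^ i n * #W)) ∧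
        ∀ x y : Fin n, x ≠ y →
          |((gSphere G x (i n) \ gSphere G y (i n)).ncard : ℝ) - d n ^ i n|
            ≤ C * (1 / √(ω n) + d n ^ i n / n) * d n ^ i n} := by
  -- The difference of two spheres requires pairs, even when `k < 2`.
  refine ⟨48 * √((k + 2 : ℕ) + 2) + 9 * (k + 2 : ℕ), by positivity, ?_⟩
  intro p d ω i hd hω hωd hp hdi
  have hω_sqrt : Tendsto (fun n ↦ 8 * √((k + 2 : ℕ) + 2) * (1 / √(ω n))) atTop (𝓝 0) := by
    simpa using (Real.tendsto_sqrt_atTop.comp hω).inv_tendsto_atTop.const_mul _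
  have hk_di : Tendsto (fun n ↦ (k + 2 : ℕ) * (d n ^ i n / n)) atTop (𝓝 0) := by
    simpa using hdi.const_mul _
  refine aas_of_eventually_one_sub_le (tendsto_const_div_atTop_nhds_zero_nat 2) ?_
  filter_upwards [eventually_four_le_of_mul_log_le hω hωd, hωd, hp, hω.eventually_gt_atTop 0,
    hω_sqrt.eventually_le_const (by norm_num : (0 : ℝ) < 1 / 8),
    hk_di.eventually_le_const (by norm_num : (0 : ℝ) < 1 / 100)] with
    n hd₄ hωd hp hω hω_sqrt hdi
  have hp₀ : 0 ≤ p n := (pos_of_mul_pos_left (by linarith [hd n]) n.cast_nonneg).le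
  have hdn : d n = p n * Nat.card (Fin n) := by rw [Nat.card_fin, hd]
  refine ⟨⟨p n, hp₀, hp⟩, rfl, le_trans ?_ <| measureReal_mono <|
    sphereExpansion_subset (k.le_add_right 2) (by positivity) le_rfl⟩
  simpa only [Nat.card_fin] using one_sub_two_div_le_binomialRandom_real_sphereExpansion
    (V := Fin n) (p := ⟨p n, hp₀, hp⟩) (w := ω n) (i := i n) (Nat.le_add_left 2 k) hdn
    hd₄ hω (by rwa [Nat.card_fin]) hω_sqrt (by rwa [Nat.card_fin])

theorem stmt4_gnp_sphere_expansion
    (p d : ℕ → ℝ) (ω : ℕ → ℝ) (i : ℕ → ℕ)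
    (hd : ∀ n, d n = p n * n)
    (hω : Filter.Tendsto ω Filter.atTop Filter.atTop)
    (hωle : ∀ᶠ n : ℕ in Filter.atTop,
      ω n ≤ (Real.log n) ^ 4 * (Real.log (Real.log n)) ^ 2)
    (hωd : ∀ᶠ n : ℕ in Filter.atTop, ω n * Real.log n ≤ d n)
    (hdn : Filter.Tendsto (fun n : ℕ => d n / n) Filter.atTop (nhds 0))
    (hdi : Filter.Tendsto (fun n : ℕ => d n ^ i n / n) Filter.atTop (nhds 0)) :
    ∃ C : ℝ, 0 < C ∧
      AAS p (fun n : ℕ =>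
        {G : SimpleGraph (Fin n) |
          (∀ W : Finset (Fin n), W.card ≤ 2 →
            |(((⋃ v ∈ W, gSphere G v (i n)).ncard : ℝ)) - d n ^ i n * W.card|
              ≤ C * (1 / Real.sqrt (ω n) + d n ^ i n / n) * (d n ^ i n * W.card)) ∧
          (∀ x y : Fin n, x ≠ y →
            |(((gSphere G x (i n) \ gSphere G y (i n)).ncard : ℝ)) - d n ^ i n|
              ≤ C * (1 / Real.sqrt (ω n) + d n ^ i n / n) * d n ^ i n)}) := by
  obtain ⟨C, hC, aas⟩ := stmt4_gnp_sphere_expansion_general 2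
  exact ⟨C, hC, aas p d ω i hd hω hωd (eventually_le_one_of_tendsto_div hd hdn) hdi⟩
end
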